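/- Let p(x) be a co-NSOP_1 partial type over M, let φ(x,y) ∈ L(M), and let c be a tuple of realizations of p such that φ(x,c) Kim-divides over M. Then there is a bound, depending only on φ(x,y) and tp(c/M), on the length n of any sequence c₀,…,c_n with each c_i ⊨ tp(c/M) for which there exist global M-finitely satisfiable types p₀,…,p_n with c_i ⊨ p_i(x)|_{M c₀…c_{i-1}} for each 0 ≤ i ≤ n and {φ(x,c_i) : 0 ≤ i ≤ n} consistent. -/

import Mathlib

namespace NSOP3Paper

open FirstOrder Language

universe u v w w' w₂ x y z

/-- Consistency (equivalently, by compactness over the monster model, finite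
satisfiability) of a family of conditions on tuples. -/
def FamConsistent {ι : Type*} {X : Type*} (C : ι → X → Prop) : Prop :=
  ∀ s : Finset ι, ∃ xx : X, ∀ i ∈ s, C i xx

/-- `k`-inconsistency of a family of conditions: any `k` of them (with pairwise
distinct indices) are jointly unsatisfiable. -/
def FamKInconsistent {ι : Type*} {X : Type*} (k : ℕ) (C : ι → X → Prop) : Prop :=
  ∀ s : Finset ι, s.card = k → ¬∃ xx : X, ∀ i ∈ s, C i xx

/-- Flattening of a family of tuples into a single tuple. -/
def flat {𝕄 : Type w} {ι : Type*} {β : Type*} (a : ι → β → 𝕄) : ι × β → 𝕄 :=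
  fun q => a q.1 q.2

/-- A first-order `L`-formula in free variables `α`, together with a tuple of
parameters from `𝕄`; this represents an instance `φ(x̄, b̄)`. -/
structure ParamFormula (L : FirstOrder.Language.{u, v}) (𝕄 : Type w) [L.Structure 𝕄]
    (α : Type w') where
  Params : Type
  toFormula : L.Formula (α ⊕ Params)
  params : Params → 𝕄

namespace ParamFormula

variable {L : FirstOrder.Language.{u, v}} {𝕄 : Type w} [L.Structure 𝕄] {α : Type w'}

/-- Realization of `φ(x̄, b̄)` at a tuple from `𝕄`. -/
def Realize (φ : ParamFormula L 𝕄 α) (xx : α → 𝕄) : Prop :=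
  φ.toFormula.Realize (Sum.elim xx φ.params)

/-- All parameters of `φ` lie in `A`; i.e. `φ ∈ L(A)`. -/
def ParamsIn (φ : ParamFormula L 𝕄 α) (A : Set 𝕄) : Prop :=
  ∀ i, φ.params i ∈ A

/-- Negation of a formula with parameters. -/
protected def not (φ : ParamFormula L 𝕄 α) : ParamFormula L 𝕄 α :=
  ⟨φ.Params, BoundedFormula.not φ.toFormula, φ.params⟩

/-- Substitute a tuple of elements of `𝕄` for the second group of free variables,
obtaining the instance `φ(x̄, c̄)` as a formula with parameters. -/
def subst {γ : Type} (φ : ParamFormula L 𝕄 (α ⊕ γ)) (c : γ → 𝕄) : ParamFormula L 𝕄 α :=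
  ⟨γ ⊕ φ.Params,
    (φ.toFormula).relabel (Sum.elim (Sum.map id Sum.inl) (Sum.inr ∘ Sum.inr)),
    Sum.elim c φ.params⟩

end ParamFormula

section TypesDefs

variable (L : FirstOrder.Language.{u, v}) (𝕄 : Type w) [L.Structure 𝕄]

/-- Two tuples have the same type over the parameter set `A` (written `b ≡_A b'`). -/
def TpEq (A : Set 𝕄) {β : Type w'} (b b' : β → 𝕄) : Prop :=
  ∀ φ : ParamFormula L 𝕄 β, φ.ParamsIn A → (φ.Realize b ↔ φ.Realize b')

/-- A complete global type in variables `α`: a complete, consistent set of formulas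
with parameters from the monster model `𝕄`. -/
structure GlobalType (α : Type w') where
  Mem : ParamFormula L 𝕄 α → Prop
  consistent : ∀ S : Finset (ParamFormula L 𝕄 α), (∀ φ ∈ S, Mem φ) →
    ∃ xx : α → 𝕄, ∀ φ ∈ S, φ.Realize xx
  complete : ∀ φ : ParamFormula L 𝕄 α, Mem φ ∨ Mem φ.not

/-- A sequence of tuples is indiscernible over the parameter set `A`: any two finite
increasing subtuples of the same length have the same type over `A`. -/
def IndiscernibleOver (A : Set 𝕄) {β : Type w'} (b : ℕ → β → 𝕄) : Prop :=
  ∀ (n : ℕ) (f g : Fin n → ℕ), StrictMono f → StrictMono g →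
    TpEq L 𝕄 A (fun q : Fin n × β => b (f q.1) q.2) (fun q : Fin n × β => b (g q.1) q.2)

end TypesDefs

namespace GlobalType

variable {L : FirstOrder.Language.{u, v}} {𝕄 : Type w} [L.Structure 𝕄] {α : Type w'}

/-- A global type is invariant over `A` if membership of `φ(x̄, b̄)` depends only on
the type of `b̄` over `A`. -/
def InvariantOver (p : GlobalType L 𝕄 α) (A : Set 𝕄) : Prop :=
  ∀ (P : Type) (ψ : L.Formula (α ⊕ P)) (b b' : P → 𝕄),
    TpEq L 𝕄 A b b' → (p.Mem ⟨P, ψ, b⟩ ↔ p.Mem ⟨P, ψ, b'⟩)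

/-- A global type is finitely satisfiable in `A` if each of its formulas is satisfied
by a tuple from `A`. -/
def FinSatIn (p : GlobalType L 𝕄 α) (A : Set 𝕄) : Prop :=
  ∀ φ : ParamFormula L 𝕄 α, p.Mem φ → ∃ xx : α → 𝕄, (∀ i, xx i ∈ A) ∧ φ.Realize xx

/-- `a ⊨ p|_B` : the tuple `a` realizes the restriction of the global type `p` to the
parameter set `B`. -/
def RealizesOver (p : GlobalType L 𝕄 α) (B : Set 𝕄) (a : α → 𝕄) : Prop :=
  ∀ φ : ParamFormula L 𝕄 α, p.Mem φ → φ.ParamsIn B → φ.Realize a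

/-- `(b i)` is a Morley sequence in `p` over `A`: each `b i ⊨ p|_{A b_{<i}}`. -/
def IsMorleyOver (p : GlobalType L 𝕄 α) (A : Set 𝕄) (b : ℕ → α → 𝕄) : Prop :=
  ∀ i : ℕ, p.RealizesOver (A ∪ ⋃ j ∈ Set.Iio i, Set.range (b j)) (b i)

end GlobalType

section MorleyDefs

variable (L : FirstOrder.Language.{u, v}) (𝕄 : Type w) [L.Structure 𝕄]

/-- `(b i)` is an invariant Morley sequence over `A`: a Morley sequence in some global
type invariant over `A`. -/
def IsInvMorleyOver (A : Set 𝕄) {α : Type w'} (b : ℕ → α → 𝕄) : Prop :=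
  ∃ p : GlobalType L 𝕄 α, p.InvariantOver A ∧ p.IsMorleyOver A b

/-- `(b i)` is a coheir Morley sequence over `A`: a Morley sequence in some global
type finitely satisfiable in `A`. -/
def IsCoheirMorleyOver (A : Set 𝕄) {α : Type w'} (b : ℕ → α → 𝕄) : Prop :=
  ∃ p : GlobalType L 𝕄 α, p.FinSatIn A ∧ p.IsMorleyOver A b

end MorleyDefs

namespace ParamFormula

variable {L : FirstOrder.Language.{u, v}} {𝕄 : Type w} [L.Structure 𝕄] {α : Type w'}

/-- `φ(x̄, b̄)` Kim-divides over `A`: some invariant Morley sequence over `A` starting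
with `b̄` makes the corresponding instances inconsistent. -/
def KimDividesOver (φ : ParamFormula L 𝕄 α) (A : Set 𝕄) : Prop :=
  ∃ b : ℕ → φ.Params → 𝕄, b 0 = φ.params ∧ IsInvMorleyOver L 𝕄 A b ∧
    ¬FamConsistent fun (i : ℕ) (xx : α → 𝕄) => φ.toFormula.Realize (Sum.elim xx (b i))

/-- `φ(x̄, b̄)` Conant-divides over `A`: every invariant Morley sequence over `A`
starting with `b̄` makes the corresponding instances inconsistent. -/
def ConantDividesOver (φ : ParamFormula L 𝕄 α) (A : Set 𝕄) : Prop :=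
  ∀ b : ℕ → φ.Params → 𝕄, b 0 = φ.params → IsInvMorleyOver L 𝕄 A b →
    ¬FamConsistent fun (i : ℕ) (xx : α → 𝕄) => φ.toFormula.Realize (Sum.elim xx (b i))

/-- `φ(x̄, b̄)` divides over `A`: some `A`-indiscernible sequence starting with `b̄`
makes the corresponding instances inconsistent. -/
def DividesOver (φ : ParamFormula L 𝕄 α) (A : Set 𝕄) : Prop :=
  ∃ b : ℕ → φ.Params → 𝕄, b 0 = φ.params ∧ IndiscernibleOver L 𝕄 A b ∧
    ¬FamConsistent fun (i : ℕ) (xx : α → 𝕄) => φ.toFormula.Realize (Sum.elim xx (b i))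

/-- `φ` Kim-forks over `A`: it implies a finite disjunction of formulas Kim-dividing
over `A`. -/
def KimForksOver (φ : ParamFormula L 𝕄 α) (A : Set 𝕄) : Prop :=
  ∃ (k : ℕ) (ψ : Fin k → ParamFormula L 𝕄 α), (∀ j, (ψ j).KimDividesOver A) ∧
    ∀ xx : α → 𝕄, φ.Realize xx → ∃ j, (ψ j).Realize xx

/-- `φ` Conant-forks over `A`: it implies a finite disjunction of formulas
Conant-dividing over `A`. -/
def ConantForksOver (φ : ParamFormula L 𝕄 α) (A : Set 𝕄) : Prop :=
  ∃ (k : ℕ) (ψ : Fin k → ParamFormula L 𝕄 α), (∀ j, (ψ j).ConantDividesOver A) ∧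
    ∀ xx : α → 𝕄, φ.Realize xx → ∃ j, (ψ j).Realize xx

/-- `φ` forks over `A`: it implies a finite disjunction of formulas dividing over `A`. -/
def ForksOver (φ : ParamFormula L 𝕄 α) (A : Set 𝕄) : Prop :=
  ∃ (k : ℕ) (ψ : Fin k → ParamFormula L 𝕄 α), (∀ j, (ψ j).DividesOver A) ∧
    ∀ xx : α → 𝕄, φ.Realize xx → ∃ j, (ψ j).Realize xx

end ParamFormula

section IndDefs

variable (L : FirstOrder.Language.{u, v}) (𝕄 : Type w) [L.Structure 𝕄]

/-- `a ⫝^K_A B` : `tp(a/A ∪ B)` contains no formula Kim-forking over `A`. -/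
def IndKim (A B : Set 𝕄) {γ : Type w'} (a : γ → 𝕄) : Prop :=
  ∀ φ : ParamFormula L 𝕄 γ, φ.ParamsIn (A ∪ B) → φ.Realize a → ¬φ.KimForksOver A

/-- `a ⫝^{Kd}_A B` : `tp(a/A ∪ B)` contains no formula Kim-dividing over `A`. -/
def IndKd (A B : Set 𝕄) {γ : Type w'} (a : γ → 𝕄) : Prop :=
  ∀ φ : ParamFormula L 𝕄 γ, φ.ParamsIn (A ∪ B) → φ.Realize a → ¬φ.KimDividesOver A

/-- `a ⫝^{K*}_A B` : Conant-independence. -/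
def IndConant (A B : Set 𝕄) {γ : Type w'} (a : γ → 𝕄) : Prop :=
  ∀ φ : ParamFormula L 𝕄 γ, φ.ParamsIn (A ∪ B) → φ.Realize a → ¬φ.ConantForksOver A

/-- `a ⫝^{K*d}_A B` : Conant-dividing independence. -/
def IndConantD (A B : Set 𝕄) {γ : Type w'} (a : γ → 𝕄) : Prop :=
  ∀ φ : ParamFormula L 𝕄 γ, φ.ParamsIn (A ∪ B) → φ.Realize a → ¬φ.ConantDividesOver A

/-- `a ⫝^f_A B` : forking-independence. -/
def IndForking (A B : Set 𝕄) {γ : Type w'} (a : γ → 𝕄) : Prop :=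
  ∀ φ : ParamFormula L 𝕄 γ, φ.ParamsIn (A ∪ B) → φ.Realize a → ¬φ.ForksOver A

/-- `a ⫝^i_A B` : `tp(a/A ∪ B)` extends to a global type invariant over `A`. -/
def IndInv (A B : Set 𝕄) {γ : Type w'} (a : γ → 𝕄) : Prop :=
  ∃ p : GlobalType L 𝕄 γ, p.InvariantOver A ∧
    ∀ φ : ParamFormula L 𝕄 γ, φ.ParamsIn (A ∪ B) → φ.Realize a → p.Mem φ

/-- `a ⫝^u_A B` : `tp(a/A ∪ B)` extends to a global type finitely satisfiable in `A`. -/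
def IndFinSat (A B : Set 𝕄) {γ : Type w'} (a : γ → 𝕄) : Prop :=
  ∃ p : GlobalType L 𝕄 γ, p.FinSatIn A ∧
    ∀ φ : ParamFormula L 𝕄 γ, φ.ParamsIn (A ∪ B) → φ.Realize a → p.Mem φ

/-- `a ⫝^{K+}_A b` : there is an invariant Morley sequence over `A` starting with `b`
that is indiscernible over `A ∪ a`. -/
def IndKPlus (A : Set 𝕄) {δ : Type w'} {γ : Type w₂} (b : δ → 𝕄) (a : γ → 𝕄) : Prop :=
  ∃ bs : ℕ → δ → 𝕄, bs 0 = b ∧ IsInvMorleyOver L 𝕄 A bs ∧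
    IndiscernibleOver L 𝕄 (A ∪ Set.range a) bs

/-- `a ⫝^{K+u}_A b` : there is a coheir Morley sequence over `A` starting with `b`
that is indiscernible over `A ∪ a`. -/
def IndKPlusU (A : Set 𝕄) {δ : Type w'} {γ : Type w₂} (b : δ → 𝕄) (a : γ → 𝕄) : Prop :=
  ∃ bs : ℕ → δ → 𝕄, bs 0 = b ∧ IsCoheirMorleyOver L 𝕄 A bs ∧
    IndiscernibleOver L 𝕄 (A ∪ Set.range a) bs

/-- Conant-independence `⫝^{K*}` is symmetric (over every small model). -/
def ConantSymmetric : Prop :=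
  ∀ (M : L.ElementarySubstructure 𝕄) (γ δ : Type w) (a : γ → 𝕄) (b : δ → 𝕄),
    IndConant L 𝕄 (M : Set 𝕄) (Set.range b) a → IndConant L 𝕄 (M : Set 𝕄) (Set.range a) b

/-- Conant-dividing independence `⫝^{K*d}` is symmetric. -/
def ConantDSymmetric : Prop :=
  ∀ (M : L.ElementarySubstructure 𝕄) (γ δ : Type w) (a : γ → 𝕄) (b : δ → 𝕄),
    IndConantD L 𝕄 (M : Set 𝕄) (Set.range b) a → IndConantD L 𝕄 (M : Set 𝕄) (Set.range a) b

/-- The relation `⫝^{K+}` is symmetric. -/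
def KPlusSymmetric : Prop :=
  ∀ (M : L.ElementarySubstructure 𝕄) (γ δ : Type w) (a : γ → 𝕄) (b : δ → 𝕄),
    IndKPlus L 𝕄 (M : Set 𝕄) b a → IndKPlus L 𝕄 (M : Set 𝕄) a b

/-- Forking-independence satisfies the chain condition with respect to invariant
Morley sequences. -/
def ChainConditionF : Prop :=
  ∀ (M : L.ElementarySubstructure 𝕄) (γ δ : Type w) (a : γ → 𝕄) (bs : ℕ → δ → 𝕄),
    IsInvMorleyOver L 𝕄 (M : Set 𝕄) bs →
    IndForking L 𝕄 (M : Set 𝕄) (Set.range (bs 0)) a →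
    ∃ bs' : ℕ → δ → 𝕄,
      TpEq L 𝕄 ((M : Set 𝕄) ∪ Set.range (bs 0)) (flat bs') (flat bs) ∧
      IndiscernibleOver L 𝕄 ((M : Set 𝕄) ∪ Set.range a) bs' ∧
      IndForking L 𝕄 (M : Set 𝕄) (Set.range (flat bs')) a

/-- Kim-independence satisfies the chain condition with respect to invariant Morley
sequences. -/
def ChainConditionK : Prop :=
  ∀ (M : L.ElementarySubstructure 𝕄) (γ δ : Type w) (a : γ → 𝕄) (bs : ℕ → δ → 𝕄),
    IsInvMorleyOver L 𝕄 (M : Set 𝕄) bs →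
    IndKim L 𝕄 (M : Set 𝕄) (Set.range (bs 0)) a →
    ∃ bs' : ℕ → δ → 𝕄,
      TpEq L 𝕄 ((M : Set 𝕄) ∪ Set.range (bs 0)) (flat bs') (flat bs) ∧
      IndiscernibleOver L 𝕄 ((M : Set 𝕄) ∪ Set.range a) bs' ∧
      IndKim L 𝕄 (M : Set 𝕄) (Set.range (flat bs')) a

/-- `T` is NSOP₃: there is no definable binary relation on tuples with no 3-cycles
containing an infinite chain. -/
def IsNSOP3 : Prop :=
  ¬∃ (m : ℕ) (R : ParamFormula L 𝕄 (Fin m ⊕ Fin m)) (a : ℕ → Fin m → 𝕄),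
    (∀ i j : ℕ, i < j → R.Realize (Sum.elim (a i) (a j))) ∧
    ¬∃ x1 x2 x3 : Fin m → 𝕄,
      R.Realize (Sum.elim x1 x2) ∧ R.Realize (Sum.elim x2 x3) ∧ R.Realize (Sum.elim x3 x1)

/-- `𝕄` is a `κ`-monster: every consistent type in fewer than `κ` variables over a
parameter set of size less than `κ` is realized. -/
class IsMonster (κ : Cardinal.{w}) : Prop where
  saturated : ∀ {α : Type w} (A : Set 𝕄) (S : Set (ParamFormula L 𝕄 α)),
    Cardinal.mk α < κ → Cardinal.mk A < κ → (∀ φ ∈ S, φ.ParamsIn A) →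
    (∀ S₀ : Finset (ParamFormula L 𝕄 α), (∀ φ ∈ S₀, φ ∈ S) →
      ∃ xx : α → 𝕄, ∀ φ ∈ S₀, φ.Realize xx) →
    ∃ xx : α → 𝕄, ∀ φ ∈ S, φ.Realize xx

/-- A tuple realizes the partial type `P`. -/
def RealizesPType {nv : ℕ} (P : Set (ParamFormula L 𝕄 (Fin nv))) (a : Fin nv → 𝕄) : Prop :=
  ∀ φ ∈ P, φ.Realize a

/-- `p(x̄)` is co-NSOP₁: no `L(M)`-formula `φ(x̄, ȳ)` and tree of tuples of
realizations of `p` witness SOP₁-style consistency/inconsistency. -/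
def CoNSOP1 (M : Set 𝕄) {nv : ℕ} (P : Set (ParamFormula L 𝕄 (Fin nv))) : Prop :=
  ¬∃ (k m : ℕ) (φ : ParamFormula L 𝕄 (Fin k ⊕ (Fin m × Fin nv)))
      (b : List Bool → Fin m → Fin nv → 𝕄),
    φ.ParamsIn M ∧
    (∀ η j, RealizesPType L 𝕄 P (b η j)) ∧
    (∀ σ : ℕ → Bool, FamConsistent fun (n : ℕ) (xx : Fin k → 𝕄) =>
      (φ.subst (flat (b (List.ofFn fun i : Fin n => σ i)))).Realize xx) ∧
    (∀ η₁ η₂ : List Bool, (η₁ ++ [false]) <+: η₂ →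
      ¬∃ xx : Fin k → 𝕄, (φ.subst (flat (b η₂))).Realize xx ∧
        (φ.subst (flat (b (η₁ ++ [true])))).Realize xx)

/-- The set of realizations of the partial type `P`. -/
def PRealizations {nv : ℕ} (P : Set (ParamFormula L 𝕄 (Fin nv))) : Type w :=
  { a : Fin nv → 𝕄 // RealizesPType L 𝕄 P a }

/-- The language `L_p` associated to a partial `nv`-type: an `m`-ary relation symbol
for each `L(M)`-formula in `m` groups of `nv` variables. -/
def pLang (M : Set 𝕄) (nv : ℕ) : Language :=
  ⟨fun _ => Empty, fun m => { φ : ParamFormula L 𝕄 (Fin m × Fin nv) // φ.ParamsIn M }⟩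

/-- The structure `M_p` on the set of realizations of `p`, with relations interpreted
by the corresponding formulas in `𝕄`. -/
instance pStruct (M : Set 𝕄) {nv : ℕ} (P : Set (ParamFormula L 𝕄 (Fin nv))) :
    (pLang L 𝕄 M nv).Structure (PRealizations L 𝕄 P) where
  funMap := fun {n} f _ => f.elim
  RelMap := fun {m} R xs => R.1.Realize fun q : Fin m × Fin nv => (xs q.1).1 q.2

end IndDefs

/-- An SOP₁ pattern witnessed inside the structure `W`. -/
def SOP1PatternIn (L' : FirstOrder.Language.{x, y}) (W : Type z) [L'.Structure W] : Prop :=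
  ∃ (k n : ℕ) (φ : L'.Formula (Fin k ⊕ Fin n)) (bt : List Bool → Fin n → W),
    (∀ σ : ℕ → Bool, FamConsistent fun (i : ℕ) (xx : Fin k → W) =>
      φ.Realize (Sum.elim xx (bt (List.ofFn fun j : Fin i => σ j)))) ∧
    (∀ η₁ η₂ : List Bool, (η₁ ++ [false]) <+: η₂ →
      ¬∃ xx : Fin k → W, φ.Realize (Sum.elim xx (bt η₂)) ∧
        φ.Realize (Sum.elim xx (bt (η₁ ++ [true]))))

/-- The complete theory of `N` is NSOP₁: no SOP₁ pattern in any elementarily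
equivalent structure. -/
def IsNSOP1Th (L' : FirstOrder.Language.{x, y}) (N : Type z) [L'.Structure N] : Prop :=
  ¬∃ (W : Type (max x y z)) (S : L'.Structure W),
    L'.completeTheory N = @Language.completeTheory L' W S ∧ @SOP1PatternIn L' W S

/-- The formula `φ(x̄, ȳ)` has the tree property, witnessed in `W`. -/
def FormulaTPIn (L' : FirstOrder.Language.{x, y}) (W : Type z) [L'.Structure W]
    {k n : ℕ} (φ : L'.Formula (Fin k ⊕ Fin n)) : Prop :=
  ∃ (kk : ℕ) (bt : List ℕ → Fin n → W),
    (∀ σ : ℕ → ℕ, FamConsistent fun (i : ℕ) (xx : Fin k → W) =>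
      φ.Realize (Sum.elim xx (bt (List.ofFn fun j : Fin i => σ j)))) ∧
    (∀ η : List ℕ, FamKInconsistent kk fun (j : ℕ) (xx : Fin k → W) =>
      φ.Realize (Sum.elim xx (bt (η ++ [j]))))

/-- The formula `φ(x̄, ȳ)` has SOP₁, witnessed in `W`. -/
def FormulaSOP1In (L' : FirstOrder.Language.{x, y}) (W : Type z) [L'.Structure W]
    {k n : ℕ} (φ : L'.Formula (Fin k ⊕ Fin n)) : Prop :=
  ∃ bt : List Bool → Fin n → W,
    (∀ σ : ℕ → Bool, FamConsistent fun (i : ℕ) (xx : Fin k → W) =>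
      φ.Realize (Sum.elim xx (bt (List.ofFn fun j : Fin i => σ j)))) ∧
    (∀ η₁ η₂ : List Bool, (η₁ ++ [false]) <+: η₂ →
      ¬∃ xx : Fin k → W, φ.Realize (Sum.elim xx (bt η₂)) ∧
        φ.Realize (Sum.elim xx (bt (η₁ ++ [true]))))

/-- Longest common prefix (meet in the tree `2^{<ω}`). -/
def meet : List Bool → List Bool → List Bool
  | a :: as, b :: bs => if a = b then a :: meet as bs else []
  | _, _ => []

/-- Strict tree order (strict prefix) on `2^{<ω}`. -/
def StrictPrefix (η ν : List Bool) : Prop := η <+: ν ∧ η ≠ ν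

/-- Lexicographic order on `2^{<ω}`. -/
def LexLt (η ν : List Bool) : Prop :=
  StrictPrefix η ν ∨ ((meet η ν ++ [false]) <+: η ∧ (meet η ν ++ [true]) <+: ν)

/-- The meet `c 0 ∧ … ∧ c k`. -/
def meetInit (c : ℕ → List Bool) : ℕ → List Bool
  | 0 => c 0
  | k + 1 => meet (meetInit c k) (c (k + 1))

/-- `c 0, …, c (l-1)` is a descending comb: a lexicographically increasing antichain
whose successive meets form a strictly descending chain in the tree order. -/
def IsDescendingComb (l : ℕ) (c : ℕ → List Bool) : Prop :=
  (∀ i j, i < l → j < l → i ≠ j → ¬(c i <+: c j)) ∧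
  (∀ i j, i < j → j < l → LexLt (c i) (c j)) ∧
  (∀ k, k + 1 < l → StrictPrefix (meetInit c (k + 1)) (meetInit c k))

section DCTP

variable (L : FirstOrder.Language.{u, v}) (𝕄 : Type w) [L.Structure 𝕄]

/-- `T` has `k`-DCTP₂. -/
def HasKDCTP2 (k : ℕ) : Prop :=
  ∃ (kx ny : ℕ) (φ : ParamFormula L 𝕄 (Fin kx ⊕ Fin ny)) (b : List Bool → Fin ny → 𝕄),
    (∀ σ : ℕ → Bool, FamKInconsistent k fun (n : ℕ) (xx : Fin kx → 𝕄) =>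
      (φ.subst (b (List.ofFn fun i : Fin n => σ i))).Realize xx) ∧
    (∀ (l : ℕ) (c : ℕ → List Bool), IsDescendingComb l c →
      ∃ xx : Fin kx → 𝕄, ∀ i < l, (φ.subst (b (c i))).Realize xx)

/-- `T` is N-ω-DCTP₂: it does not have `k`-DCTP₂ for any `k`. -/
def NOmegaDCTP2 : Prop := ∀ k : ℕ, ¬HasKDCTP2 L 𝕄 k

/-- A generic triple of sets of realizations of three partial types: the three sets
begin mutually indiscernible invariant Morley sequences over `M`. -/
def GenericTriple (M : Set 𝕄) {ι₁ ι₂ ι₃ : Type w} {nv₁ nv₂ nv₃ : ℕ}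
    (A : ι₁ → Fin nv₁ → 𝕄) (B : ι₂ → Fin nv₂ → 𝕄) (C : ι₃ → Fin nv₃ → 𝕄) : Prop :=
  ∃ (IA : ℕ → ι₁ → Fin nv₁ → 𝕄) (IB : ℕ → ι₂ → Fin nv₂ → 𝕄) (IC : ℕ → ι₃ → Fin nv₃ → 𝕄),
    IA 0 = A ∧ IB 0 = B ∧ IC 0 = C ∧
    IsInvMorleyOver L 𝕄 M (fun i => flat (IA i)) ∧
    IsInvMorleyOver L 𝕄 M (fun i => flat (IB i)) ∧
    IsInvMorleyOver L 𝕄 M (fun i => flat (IC i)) ∧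
    IndiscernibleOver L 𝕄
      (M ∪ Set.range (flat fun i => flat (IB i)) ∪ Set.range (flat fun i => flat (IC i)))
      (fun i => flat (IA i)) ∧
    IndiscernibleOver L 𝕄
      (M ∪ Set.range (flat fun i => flat (IA i)) ∪ Set.range (flat fun i => flat (IC i)))
      (fun i => flat (IB i)) ∧
    IndiscernibleOver L 𝕄
      (M ∪ Set.range (flat fun i => flat (IA i)) ∪ Set.range (flat fun i => flat (IB i)))
      (fun i => flat (IC i))

end DCTP

/-- The language of hypergraph sequences: one `n`-ary relation symbol for each `n`. -/
def hgLang : FirstOrder.Language.{0, 0} := ⟨fun _ => Empty, fun _ => PUnit⟩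

section Hypergraph

variable (V : Type z) [hgLang.Structure V]

/-- The `n`-ary edge relation of a hypergraph sequence. -/
def hgRel {n : ℕ} (v : Fin n → V) : Prop :=
  @Structure.RelMap hgLang V _ n PUnit.unit v

/-- A family of vertices is a clique: every tuple of its members is an edge. -/
def IsClique {ι : Type*} (a : ι → V) : Prop :=
  ∀ (n : ℕ) (f : Fin n → ι), hgRel V fun j => a (f j)

/-- A family of vertices is a `k`-anticlique: no `k`-tuple of its members (with
pairwise distinct indices) is an edge. -/
def IsAnticlique (k : ℕ) {ι : Type*} (a : ι → V) : Prop :=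
  ∀ f : Fin k → ι, Function.Injective f → ¬hgRel V fun j => a (f j)

/-- The hypergraph sequence has MTP. -/
def HasMTP : Prop :=
  ∃ (k : ℕ) (bt : List ℕ → V),
    (∀ σ : ℕ → ℕ, IsClique V fun n : ℕ => bt (List.ofFn fun j : Fin n => σ j)) ∧
    (∀ η : List ℕ, IsAnticlique V k fun n : ℕ => bt (η ++ [n]))

/-- The hypergraph sequence has an `(ω, ω, 1)`-array. -/
def HasOmegaArray : Prop :=
  ∃ (k : ℕ) (bt : ℕ → ℕ → V),
    (∀ i : ℕ, IsClique V (bt i)) ∧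
    (∀ σ : ℕ → ℕ, IsAnticlique V k fun i : ℕ => bt i (σ i))

/-- The hypergraph sequence has MSOP₁. -/
def HasMSOP1 : Prop :=
  ∃ bt : List Bool → V,
    (∀ σ : ℕ → Bool, IsClique V fun n : ℕ => bt (List.ofFn fun j : Fin n => σ j)) ∧
    (∀ η₁ η₂ : List Bool, (η₁ ++ [false]) <+: η₂ →
      IsAnticlique V 2 ![bt η₂, bt (η₁ ++ [true])])

/-- The hypergraph sequence has ω-MDCTP₂. -/
def HasOmegaMDCTP2 : Prop :=
  ∃ (k : ℕ) (bt : List Bool → V),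
    (∀ σ : ℕ → Bool, IsAnticlique V k fun n : ℕ => bt (List.ofFn fun j : Fin n => σ j)) ∧
    (∀ (l : ℕ) (c : ℕ → List Bool), IsDescendingComb l c →
      IsClique V fun i : Fin l => bt (c i))

/-- The hypergraph sequence has the compatible order property. -/
def HasCompatibleOrderProperty : Prop :=
  ∃ c d : ℕ → V,
    (∀ m n : ℕ, m < n →
      IsClique V fun i : Fin (n + 1) => if (i : ℕ) ≤ m then d i else c i) ∧
    (∀ m n : ℕ, m < n → ¬hgRel V ![c m, d n])

end Hypergraph

/-
Suppose `φ` is consistent along arbitrarily long generic sequences in invariant extensions of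
`tp(c/M)`, and let `q` be such an extension along whose Morley sequences `φ` is inconsistent. There
is a largest `l` such that arbitrarily long sequences of such extensions can be continued by `l`
copies of `q` with `φ` consistent along the result; so for some `r` no sequence of length `r` can be
continued by `l + 1` copies. Take a very long sequence that can be continued by `l` copies. From the
leaves down, build a binary tree in which the nodes of each level realize the corresponding type of
the sequence over everything above them, while every right successor also realizes `q` over the tree
above its left sibling; then add `l` realizations `es` of `q` over the whole tree. The formula is
consistent along every path continued by `es`. But if `θ` extends `η⌢0`, then `r` consecutive
nodes above `θ`, then `η⌢1`, then `es` form a generic sequence along `r` types followed by `l + 1`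
copies of `q`, where the formula is inconsistent. Grouping `es` with `r + 1` consecutive levels into
a single node therefore gives `SOP₁` trees of every finite height, and compactness gives an infinite
one.
-/

section Definability

variable {L : FirstOrder.Language.{u, v}} {𝕄 : Type w} [L.Structure 𝕄]
variable {A : Set 𝕄} {α : Type w'} {β : Type w₂}

theorem exists_fin_realize_iff (φ : L.Formula (α ⊕ β)) :
    ∃ (n : ℕ) (f : Fin n ↪ α) (χ : L.Formula (Fin n ⊕ β)), ∀ (x : α → 𝕄) (y : β → 𝕄),
      φ.Realize (Sum.elim x y) ↔ χ.Realize (Sum.elim (x ∘ f) y) := by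
  classical
  let s : Finset α := φ.freeVarFinset.toLeft
  let g : φ.freeVarFinset → Fin s.card ⊕ β := fun t =>
    match t with
    | ⟨Sum.inl i, hi⟩ => Sum.inl (s.equivFin ⟨i, Finset.mem_toLeft.2 hi⟩)
    | ⟨Sum.inr j, _⟩ => Sum.inr j
  refine ⟨s.card, s.equivFin.symm.toEmbedding.trans (Function.Embedding.subtype _),
    BoundedFormula.restrictFreeVar φ g, fun x y => Iff.symm ?_⟩
  unfold Formula.Realize
  apply BoundedFormula.realize_restrictFreeVar
  rintro ⟨i | j, hi⟩
  · simp [g]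
  · rfl

theorem definable_sumElim {D : Set (α ⊕ β → 𝕄)} (hD : A.Definable L D) {d : β → 𝕄}
    (hd : ∀ i, d i ∈ A) : A.Definable L {x | Sum.elim x d ∈ D} := by
  obtain ⟨φ, rfl⟩ := Set.definable_iff_exists_formula_sum.1 hD
  refine Set.definable_iff_exists_formula_sum.2 ⟨φ.relabel
    (Sum.elim Sum.inl (Sum.elim Sum.inr fun i => Sum.inl ⟨d i, hd i⟩)), Set.ext fun x => ?_⟩
  simp only [Set.mem_ofPred_eq, Formula.realize_relabel]
  exact iff_of_eq (congrArg φ.Realize (funext (by rintro (i | i | i) <;> rfl)))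

theorem definable_exists {D : Set (β ⊕ α → 𝕄)} (hD : A.Definable L D) :
    A.Definable L {x : α → 𝕄 | ∃ y, Sum.elim y x ∈ D} := by
  obtain _ | ⟨⟨y₀⟩⟩ := isEmpty_or_nonempty (β → 𝕄)
  · simp
  obtain ⟨φ, rfl⟩ := Set.definable_iff_exists_formula_sum.1 hD
  obtain ⟨n, f, χ, hχ⟩ := exists_fin_realize_iff (𝕄 := 𝕄)
    (φ.relabel (Sum.elim (Sum.inr ∘ Sum.inl) (Sum.elim Sum.inl (Sum.inr ∘ Sum.inr))) :
      L.Formula (β ⊕ (A ⊕ α)))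
  have realize_iff (y : β → 𝕄) (x : α → 𝕄) : φ.Realize (Sum.elim (↑) (Sum.elim y x)) ↔
      χ.Realize (Sum.elim (y ∘ f) (Sum.elim (↑) x)) := by
    rw [← hχ, Formula.realize_relabel]
    exact iff_of_eq (congrArg φ.Realize (funext (by rintro (i | i | i) <;> rfl)))
  have hχ_def : A.Definable L {z : α ⊕ Fin n → 𝕄 |
      χ.Realize (Sum.elim (z ∘ Sum.inr) (Sum.elim (↑) (z ∘ Sum.inl)))} := by
    refine Set.definable_iff_exists_formula_sum.2 ⟨χ.relabel
      (Sum.elim (Sum.inr ∘ Sum.inr) (Sum.map id Sum.inl)), Set.ext fun z => ?_⟩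
    simp only [Set.mem_ofPred_eq, Formula.realize_relabel]
    exact iff_of_eq (congrArg χ.Realize (funext (by rintro (i | i | i) <;> rfl)))
  convert hχ_def.exists_of_finite using 3 with x
  constructor
  · rintro ⟨y, hy⟩
    exact ⟨y ∘ f, (realize_iff y x).1 hy⟩
  · rintro ⟨w, hw⟩
    have hw' : Function.extend f w y₀ ∘ f = w := funext fun i => f.injective.extend_apply w y₀ i
    exact ⟨Function.extend f w y₀, (realize_iff _ x).2 (hw'.symm ▸ hw)⟩

theorem definable_setOf_apply_eq_apply (i j : α) : A.Definable L {x : α → 𝕄 | x i = x j} :=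
  ⟨(Term.var i).equal (Term.var j), by ext; simp⟩

namespace ParamFormula

theorem realize_not (φ : ParamFormula L 𝕄 α) (x : α → 𝕄) : φ.not.Realize x ↔ ¬φ.Realize x :=
  Formula.realize_not

theorem realize_subst {γ : Type} (φ : ParamFormula L 𝕄 (α ⊕ γ)) (d : γ → 𝕄) (x : α → 𝕄) :
    (φ.subst d).Realize x ↔ φ.Realize (Sum.elim x d) := by
  unfold subst Realize
  rw [Formula.realize_relabel]
  exact iff_of_eq (congrArg φ.toFormula.Realize (funext (by rintro ((i | i) | i) <;> rfl)))

theorem ParamsIn.subst {γ : Type} {φ : ParamFormula L 𝕄 (α ⊕ γ)} (hφ : φ.ParamsIn A) (d : γ → 𝕄) :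
    (φ.subst d).ParamsIn (A ∪ Set.range d) := by
  rintro (i | i)
  · exact Or.inr ⟨i, rfl⟩
  · exact Or.inl (hφ i)

theorem ParamsIn.definable {φ : ParamFormula L 𝕄 α} (hφ : φ.ParamsIn A) :
    A.Definable L {x | φ.Realize x} := by
  refine Set.definable_iff_exists_formula_sum.2 ⟨φ.toFormula.relabel
    (Sum.elim Sum.inr fun i => Sum.inl ⟨φ.params i, hφ i⟩), Set.ext fun x => ?_⟩
  simp only [Set.mem_ofPred_eq, Formula.realize_relabel]
  exact iff_of_eq (congrArg φ.toFormula.Realize (funext (by rintro (i | i) <;> rfl)))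

end ParamFormula

theorem exists_paramFormula_of_definable {D : Set (α → 𝕄)} (hD : A.Definable L D) :
    ∃ φ : ParamFormula L 𝕄 α, φ.ParamsIn A ∧ {x | φ.Realize x} = D := by
  obtain ⟨φ, rfl⟩ := Set.definable_iff_exists_formula_sum.1 hD
  obtain ⟨n, f, χ, hχ⟩ := exists_fin_realize_iff (𝕄 := 𝕄) φ
  refine ⟨⟨Fin n, χ.relabel Sum.swap, (↑) ∘ f⟩, fun i => (f i).2, Set.ext fun x => ?_⟩
  simp only [ParamFormula.Realize, Set.mem_ofPred_eq, Formula.realize_relabel, hχ]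
  exact iff_of_eq (congrArg χ.Realize (funext (by rintro (i | i) <;> rfl)))

namespace TpEq

variable {b b' b'' : α → 𝕄}

theorem mem_iff (h : TpEq L 𝕄 A b b') {D : Set (α → 𝕄)} (hD : A.Definable L D) :
    b ∈ D ↔ b' ∈ D := by
  obtain ⟨φ, hφ, rfl⟩ := exists_paramFormula_of_definable hD
  exact h φ hφ

theorem of_forall_definable (h : ∀ D : Set (α → 𝕄), A.Definable L D → b ∈ D → b' ∈ D) :
    TpEq L 𝕄 A b b' := fun _ hφ =>
  ⟨h _ hφ.definable, fun hb' => by_contra fun hb => h _ hφ.definable.compl hb hb'⟩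

theorem refl (b : α → 𝕄) : TpEq L 𝕄 A b b := fun _ _ => Iff.rfl

theorem symm (h : TpEq L 𝕄 A b b') : TpEq L 𝕄 A b' b := fun φ hφ => (h φ hφ).symm

theorem trans (h : TpEq L 𝕄 A b b') (h' : TpEq L 𝕄 A b' b'') : TpEq L 𝕄 A b b'' :=
  fun φ hφ => (h φ hφ).trans (h' φ hφ)

theorem comp (h : TpEq L 𝕄 A b b') (f : β → α) : TpEq L 𝕄 A (b ∘ f) (b' ∘ f) :=
  of_forall_definable fun _ hD => (h.mem_iff (hD.preimage_comp f)).1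

theorem sumElim (h : TpEq L 𝕄 A b b') {d : β → 𝕄} (hd : ∀ i, d i ∈ A) :
    TpEq L 𝕄 A (Sum.elim b d) (Sum.elim b' d) :=
  of_forall_definable fun _ hD => (h.mem_iff (definable_sumElim hD hd)).1

theorem apply_eq_apply (h : TpEq L 𝕄 A b b') {i j : α} (hb : b i = b j) : b' i = b' j :=
  (h.mem_iff (definable_setOf_apply_eq_apply i j)).1 hb

end TpEq

end Definability

section GlobalTypes

variable {L : FirstOrder.Language.{u, v}} {𝕄 : Type w} [L.Structure 𝕄]
variable {A B : Set 𝕄} {α : Type w'} {β : Type w₂}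

/-- The change of variables `φ(x ∘ f)`. -/
def ParamFormula.relabel (f : α → β) (φ : ParamFormula L 𝕄 α) : ParamFormula L 𝕄 β :=
  ⟨φ.Params, φ.toFormula.relabel (Sum.map f id), φ.params⟩

theorem ParamFormula.realize_relabel (f : α → β) (φ : ParamFormula L 𝕄 α) (x : β → 𝕄) :
    (φ.relabel f).Realize x ↔ φ.Realize (x ∘ f) := by
  unfold relabel Realize
  rw [Formula.realize_relabel]
  exact iff_of_eq (congrArg φ.toFormula.Realize (funext (by rintro (i | i) <;> rfl)))

namespace GlobalType

variable {p : GlobalType L 𝕄 α}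

theorem mem_of_forall_realize {S : Finset (ParamFormula L 𝕄 α)} (hS : ∀ φ ∈ S, p.Mem φ)
    {χ : ParamFormula L 𝕄 α} (h : ∀ x, (∀ φ ∈ S, φ.Realize x) → χ.Realize x) : p.Mem χ := by
  classical
  refine (p.complete χ).resolve_right fun hχ => ?_
  obtain ⟨x, hx⟩ := p.consistent (insert χ.not S) (Finset.forall_mem_insert _ _ _ |>.2 ⟨hχ, hS⟩)
  rw [Finset.forall_mem_insert] at hx
  exact (χ.realize_not x).1 hx.1 (h x hx.2)

theorem FinSatIn.exists_realize_and (h : p.FinSatIn A) {φ ψ : ParamFormula L 𝕄 α}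
    (hφ : p.Mem φ) (hψ : p.Mem ψ) : ∃ x, (∀ i, x i ∈ A) ∧ φ.Realize x ∧ ψ.Realize x := by
  classical
  have hφ_def : (Set.univ : Set 𝕄).Definable L {x | φ.Realize x} :=
    ParamFormula.ParamsIn.definable fun _ => trivial
  have hψ_def : (Set.univ : Set 𝕄).Definable L {x | ψ.Realize x} :=
    ParamFormula.ParamsIn.definable fun _ => trivial
  obtain ⟨χ, -, hχ⟩ := exists_paramFormula_of_definable (hφ_def.inter hψ_def)
  have realize_χ (x : α → 𝕄) : χ.Realize x ↔ φ.Realize x ∧ ψ.Realize x := Set.ext_iff.1 hχ x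
  have hχ_mem : p.Mem χ := mem_of_forall_realize (S := {φ, ψ}) (by simp [hφ, hψ])
    fun x hx => (realize_χ x).2 (by simpa using hx)
  obtain ⟨x, hxA, hx⟩ := h χ hχ_mem
  exact ⟨x, hxA, (realize_χ x).1 hx⟩

theorem FinSatIn.invariantOver (h : p.FinSatIn A) : p.InvariantOver A := by
  have mem_of_tpEq {P : Type} {ψ : L.Formula (α ⊕ P)} {b b' : P → 𝕄} (hb : TpEq L 𝕄 A b b')
      (hm : p.Mem ⟨P, ψ, b⟩) : p.Mem ⟨P, ψ, b'⟩ := by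
    refine (p.complete _).resolve_right fun hm' => ?_
    obtain ⟨x, hxA, hx, hx'⟩ := h.exists_realize_and hm hm'
    rw [ParamFormula.realize_not] at hx'
    have hψ : A.Definable L {z : P ⊕ α → 𝕄 | ψ.Realize (z ∘ Sum.swap)} :=
      ((Set.empty_definable_iff.2 ⟨ψ, rfl⟩).mono (Set.empty_subset A)).preimage_comp Sum.swap
    have realize_iff := hb.mem_iff (definable_sumElim hψ hxA)
    have elim_swap (b : P → 𝕄) : Sum.elim b x ∘ Sum.swap = Sum.elim x b :=
      funext (by rintro (i | i) <;> rfl)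
    simp only [Set.mem_ofPred_eq, elim_swap] at realize_iff
    exact hx' (realize_iff.1 hx)
  exact fun P ψ b b' hb => ⟨mem_of_tpEq hb, mem_of_tpEq hb.symm⟩

namespace RealizesOver

variable {a a' : α → 𝕄}

theorem mem (h : p.RealizesOver B a) {φ : ParamFormula L 𝕄 α} (hφ : φ.ParamsIn B)
    (ha : φ.Realize a) : p.Mem φ :=
  (p.complete φ).resolve_right fun hn => (φ.realize_not a).1 (h φ.not hn hφ) ha

theorem mono (h : p.RealizesOver B a) (hAB : A ⊆ B) : p.RealizesOver A a :=
  fun φ hφ hφA => h φ hφ fun i => hAB (hφA i)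

theorem tpEq (h : p.RealizesOver B a) (h' : p.RealizesOver B a') : TpEq L 𝕄 B a a' :=
  TpEq.of_forall_definable fun D hD ha => by
    obtain ⟨φ, hφ, rfl⟩ := exists_paramFormula_of_definable hD
    exact h' φ (h.mem hφ ha) hφ

end RealizesOver

namespace InvariantOver

variable {δ : Type} {d d' : δ → 𝕄} {a a' : α → 𝕄}

theorem tpEq_sumElim (hp : p.InvariantOver A) (hd : TpEq L 𝕄 A d d')
    (ha : p.RealizesOver (A ∪ Set.range d) a) (ha' : p.RealizesOver (A ∪ Set.range d') a') :
    TpEq L 𝕄 A (Sum.elim a d) (Sum.elim a' d') :=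
  TpEq.of_forall_definable fun D hD had => by
    obtain ⟨φ, hφ, rfl⟩ := exists_paramFormula_of_definable hD
    have hm : p.Mem (φ.subst d) := ha.mem (hφ.subst d) ((φ.realize_subst d a).2 had)
    have hm' : p.Mem (φ.subst d') := (hp _ _ _ _ (hd.sumElim hφ)).1 hm
    exact (φ.realize_subst d' a').1 (ha' _ hm' (hφ.subst d'))

theorem realizesOver_of_tpEq (hp : p.InvariantOver A) (ha : p.RealizesOver (A ∪ Set.range d) a)
    (h : TpEq L 𝕄 A (Sum.elim a d) (Sum.elim a' d')) :
    p.RealizesOver (A ∪ Set.range d') a' := by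
  rintro ⟨P, ψ, b'⟩ hm' hb'
  have exists_index (i : P) : ∃ j : δ ⊕ A, Sum.elim d' (↑) j = b' i := by
    rcases hb' i with hi | ⟨j, hj⟩
    · exact ⟨Sum.inr ⟨_, hi⟩, rfl⟩
    · exact ⟨Sum.inl j, hj⟩
  choose f hf using exists_index
  obtain rfl : Sum.elim d' (↑) ∘ f = b' := funext hf
  have hA (i : A) : (i : 𝕄) ∈ A := i.2
  have hd : TpEq L 𝕄 A (Sum.elim d (↑) ∘ f) (Sum.elim d' (↑) ∘ f) :=
    ((h.comp Sum.inr).sumElim hA).comp f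
  have hψa : ψ.Realize (Sum.elim a (Sum.elim d (↑) ∘ f)) := by
    refine ha _ ((hp P ψ _ _ hd).2 hm') fun i => ?_
    change Sum.elim d (↑) (f i) ∈ _
    rcases f i with j | j
    · exact Or.inr ⟨j, rfl⟩
    · exact Or.inl j.2
  have elim_comp (a : α → 𝕄) (d : δ → 𝕄) : Sum.elim (Sum.elim a d) ((↑) : A → 𝕄) ∘
      Sum.elim (Sum.inl ∘ Sum.inl) (Sum.map Sum.inr id ∘ f) =
      Sum.elim a (Sum.elim d (↑) ∘ f) := by
    rw [Sum.comp_elim, ← Function.comp_assoc (Sum.elim (Sum.elim a d) _) (Sum.map _ _),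
      Sum.elim_comp_map]
    rfl
  have had := (h.sumElim hA).comp (Sum.elim (Sum.inl ∘ Sum.inl) (Sum.map Sum.inr id ∘ f))
  rw [elim_comp, elim_comp] at had
  exact (had.mem_iff ((Set.empty_definable_iff.2 ⟨ψ, rfl⟩).mono (Set.empty_subset A))).1 hψa

end InvariantOver

/-- The restriction of a global type in variables `β` to the variables `f : α → β`: the type of
`b ∘ f` when `b` realizes the given type. -/
def comap (f : α → β) (p : GlobalType L 𝕄 β) : GlobalType L 𝕄 α where
  Mem φ := p.Mem (φ.relabel f)
  consistent S hS := by
    classical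
    obtain ⟨x, hx⟩ := p.consistent (S.image (ParamFormula.relabel f)) (by simpa using hS)
    exact ⟨x ∘ f, fun φ hφ => (φ.realize_relabel f x).1 (hx _ (Finset.mem_image_of_mem _ hφ))⟩
  complete φ := p.complete (φ.relabel f)

theorem InvariantOver.comap {p : GlobalType L 𝕄 β} (hp : p.InvariantOver A) (f : α → β) :
    (p.comap f).InvariantOver A :=
  fun P _ b b' h => hp P _ b b' h

theorem RealizesOver.comap {p : GlobalType L 𝕄 β} {b : β → 𝕄} (hp : p.RealizesOver A b)
    (f : α → β) : (p.comap f).RealizesOver A (b ∘ f) :=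
  fun φ hφ hφA => (φ.realize_relabel f b).1 (hp _ hφ hφA)

end GlobalType

end GlobalTypes

section Saturation

variable {L : FirstOrder.Language.{u, v}} {𝕄 : Type w} [L.Structure 𝕄] {A : Set 𝕄}

/-- Saturation over `A` together with countably many further parameters, for types in countably many
variables. This is the only property of the monster model that is needed for the general theorem. -/
def IsCountablySaturatedOver (L : FirstOrder.Language.{u, v}) {𝕄 : Type w} [L.Structure 𝕄]
    (A : Set 𝕄) : Prop :=
  ∀ (α : Type) [Countable α] (B : Set 𝕄), B.Countable → ∀ S : Set (ParamFormula L 𝕄 α),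
    (∀ φ ∈ S, φ.ParamsIn (A ∪ B)) →
    (∀ S₀ : Finset (ParamFormula L 𝕄 α), ↑S₀ ⊆ S → ∃ x, ∀ φ ∈ S₀, φ.Realize x) →
    ∃ x, ∀ φ ∈ S, φ.Realize x

theorem IsMonster.isCountablySaturatedOver {κ : Cardinal.{w}} [IsMonster L 𝕄 κ]
    (hκ : Cardinal.aleph0 < κ) (hA : Cardinal.mk A < κ) : IsCountablySaturatedOver L A := by
  classical
  intro α _ B hB S hS hfin
  have hAB : Cardinal.mk ↥(A ∪ B) < κ := (Cardinal.mk_union_le A B).trans_lt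
    (Cardinal.add_lt_of_lt hκ.le hA ((Cardinal.le_aleph0_iff_set_countable.2 hB).trans_lt hκ))
  obtain ⟨x, hx⟩ := IsMonster.saturated (L := L) (κ := κ) (A ∪ B)
    (ParamFormula.relabel (ULift.up.{w} : α → ULift α) '' S)
    (Cardinal.mk_le_aleph0.trans_lt hκ) hAB (Set.forall_mem_image.2 hS) fun S₀ hS₀ => by
      obtain ⟨T, hT, rfl⟩ := Finset.subset_set_image_iff.1 hS₀
      obtain ⟨x, hx⟩ := hfin T hT
      exact ⟨x ∘ ULift.down, Finset.forall_mem_image.2 fun φ hφ =>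
        (φ.realize_relabel _ _).2 (hx φ hφ)⟩
  exact ⟨x ∘ ULift.up, fun φ hφ => (φ.realize_relabel _ x).1 (hx _ (Set.mem_image_of_mem _ hφ))⟩

theorem isClosed_of_definable [TopologicalSpace 𝕄] [DiscreteTopology 𝕄] {α : Type w'}
    {D : Set (α → 𝕄)} (hD : A.Definable L D) : IsClosed D := by
  obtain ⟨φ, -, rfl⟩ := exists_paramFormula_of_definable hD
  obtain ⟨n, f, χ, hχ⟩ := exists_fin_realize_iff (𝕄 := 𝕄) φ.toFormula
  have hD' : {x | φ.Realize x} = (fun x : α → 𝕄 => x ∘ f) ⁻¹'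
      {y | χ.Realize (Sum.elim y φ.params)} := Set.ext fun x => hχ x φ.params
  rw [hD']
  exact (isClosed_discrete _).preimage (continuous_pi fun i => continuous_apply (f i))

theorem isCountablySaturatedOver_of_finite [Finite 𝕄] : IsCountablySaturatedOver L A := by
  intro α _ B _ S hS hfin
  let _ : TopologicalSpace 𝕄 := ⊥
  have _ : DiscreteTopology 𝕄 := ⟨rfl⟩
  obtain ⟨x, hx⟩ := CompactSpace.iInter_nonempty
    (t := fun φ : S => {x : α → 𝕄 | φ.1.Realize x})
    (fun φ => isClosed_of_definable (hS φ φ.2).definable) fun T => by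
      obtain ⟨x, hx⟩ := hfin (T.map (Function.Embedding.subtype _)) (by simp)
      exact ⟨x, Set.mem_iInter₂.2 fun φ hφ => hx φ (Finset.mem_map_of_mem _ hφ)⟩
  exact ⟨x, fun φ hφ => Set.mem_iInter.1 hx ⟨φ, hφ⟩⟩

theorem IsMonster.isCountablySaturatedOver_elementarySubstructure {κ : Cardinal.{w}}
    [IsMonster L 𝕄 κ] {M : L.ElementarySubstructure 𝕄} (hM : Cardinal.mk ↥(M : Set 𝕄) < κ) :
    IsCountablySaturatedOver L (M : Set 𝕄) := by
  obtain h𝕄 | h𝕄 := finite_or_infinite 𝕄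
  · exact isCountablySaturatedOver_of_finite
  · have : Infinite M := M.elementarilyEquivalent.infinite_iff.2 h𝕄
    exact IsMonster.isCountablySaturatedOver ((Cardinal.aleph0_le_mk M).trans_lt hM) hM

namespace IsCountablySaturatedOver

variable {α β : Type} [Countable α] [Countable β]

theorem exists_forall_mem (h : IsCountablySaturatedOver L A) {B : Set 𝕄} (hB : B.Countable)
    {ι : Type*} {D : ι → Set (α → 𝕄)} (hD : ∀ i, (A ∪ B).Definable L (D i))
    (hfin : ∀ s : Finset ι, ∃ x, ∀ i ∈ s, x ∈ D i) : ∃ x, ∀ i, x ∈ D i := by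
  classical
  choose φ hφAB hφ using fun i => exists_paramFormula_of_definable (hD i)
  simp only [← hφ, Set.mem_ofPred_eq] at hfin ⊢
  obtain ⟨x, hx⟩ := h α B hB (Set.range φ) (Set.forall_mem_range.2 hφAB) fun S hS => by
    rw [← Set.image_univ, Finset.subset_set_image_iff] at hS
    obtain ⟨s, -, rfl⟩ := hS
    simpa only [Finset.forall_mem_image] using hfin s
  exact ⟨x, Set.forall_mem_range.1 hx⟩

theorem exists_realizesOver (h : IsCountablySaturatedOver L A) (p : GlobalType L 𝕄 α) {B : Set 𝕄}
    (hB : B.Countable) : ∃ a, p.RealizesOver (A ∪ B) a := by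
  obtain ⟨a, ha⟩ := h α B hB {φ | p.Mem φ ∧ φ.ParamsIn (A ∪ B)} (fun φ hφ => hφ.2)
    fun S hS => p.consistent S fun φ hφ => (hS hφ).1
  exact ⟨a, fun φ hφ hφAB => ha φ ⟨hφ, hφAB⟩⟩

theorem exists_tpEq_comp_eq (h : IsCountablySaturatedOver L A) {f : α → β} {a : β → 𝕄} {b : α → 𝕄}
    (hab : TpEq L 𝕄 A (a ∘ f) b) : ∃ b' : β → 𝕄, b' ∘ f = b ∧ TpEq L 𝕄 A a b' := by
  obtain ⟨b', hb'⟩ := h.exists_forall_mem (Set.countable_range b)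
    (ι := {D : Set (β ⊕ α → 𝕄) // A.Definable L D ∧ Sum.elim a (a ∘ f) ∈ D})
    (D := fun D => {y | Sum.elim y b ∈ D.1})
    (fun D => definable_sumElim (D.2.1.mono Set.subset_union_left) fun i => Or.inr ⟨i, rfl⟩)
    fun s => by
      have hs : A.Definable L (⋂ D ∈ s, D.1) := Set.definable_biInter_finset (fun D => D.2.1) s
      have ha : ∃ y, Sum.elim y (a ∘ f) ∈ ⋂ D ∈ s, D.1 := ⟨a, Set.mem_iInter₂.2 fun D _ => D.2.2⟩
      obtain ⟨y, hy⟩ := (hab.mem_iff (definable_exists hs)).1 ha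
      exact ⟨y, fun D hD => Set.mem_iInter₂.1 hy D hD⟩
  have hab' : TpEq L 𝕄 A (Sum.elim a (a ∘ f)) (Sum.elim b' b) :=
    TpEq.of_forall_definable fun D hD haD => hb' ⟨D, hD, haD⟩
  exact ⟨b', funext fun i => hab'.apply_eq_apply (i := Sum.inl (f i)) (j := Sum.inr i) rfl,
    hab'.comp Sum.inl⟩

end IsCountablySaturatedOver

end Saturation

section GenericSequences

variable {L : FirstOrder.Language.{u, v}} {𝕄 : Type w} [L.Structure 𝕄] {A B : Set 𝕄} {β : Type}
variable {p : GlobalType L 𝕄 β} {ps qs : List (GlobalType L 𝕄 β)} {as bs : List (β → 𝕄)}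

/-- `IsGeneric A [pₙ, …, p₀] [aₙ, …, a₀]`: each `aᵢ` realizes `pᵢ` over `A` and all `aⱼ` with
`j < i`. The tuple chosen last comes first, so that a sequence is continued by `List.cons`. -/
def IsGeneric (A : Set 𝕄) : List (GlobalType L 𝕄 β) → List (β → 𝕄) → Prop
  | [], [] => True
  | p :: ps, a :: as => p.RealizesOver (A ∪ ⋃ b ∈ as, Set.range b) a ∧ IsGeneric A ps as
  | _, _ => False

theorem countable_biUnion_range [Countable β] (as : List (β → 𝕄)) :
    (⋃ a ∈ as, Set.range a).Countable :=
  (List.finite_toSet as).countable.biUnion fun a _ => Set.countable_range a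

theorem biUnion_range_ofFn {n : ℕ} (f : Fin n → β → 𝕄) :
    ⋃ a ∈ List.ofFn f, Set.range a = Set.range (flat f) := by
  ext x
  simp only [Set.mem_iUnion, List.mem_ofFn, exists_prop, exists_exists_eq_and, Set.mem_range,
    Prod.exists, flat]

theorem biUnion_range_subset_range_flat {ι : Type*} {S : ι → β → 𝕄}
    (h : ∀ a ∈ as, a ∈ Set.range S) : ⋃ a ∈ as, Set.range a ⊆ Set.range (flat S) := by
  refine Set.iUnion₂_subset fun a ha => ?_
  obtain ⟨i, rfl⟩ := h a ha
  rintro _ ⟨j, rfl⟩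
  exact ⟨(i, j), rfl⟩

namespace IsGeneric

theorem length_eq : ∀ {ps : List (GlobalType L 𝕄 β)} {as : List (β → 𝕄)},
    IsGeneric A ps as → as.length = ps.length
  | [], [], _ => rfl
  | _ :: _, _ :: _, h => congrArg (· + 1) h.2.length_eq

theorem append (h : IsGeneric A ps as) (hB : A ∪ ⋃ a ∈ as, Set.range a ⊆ B) :
    ∀ {qs : List (GlobalType L 𝕄 β)} {bs : List (β → 𝕄)},
      IsGeneric B qs bs → IsGeneric A (qs ++ ps) (bs ++ as)
  | [], [], _ => h
  | q :: qs, b :: bs, hqb => by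
    have hbs : ⋃ a ∈ bs ++ as, Set.range a = (⋃ a ∈ bs, Set.range a) ∪ ⋃ a ∈ as, Set.range a := by
      simp only [List.mem_append, Set.iUnion_or, Set.iUnion_union_distrib]
    refine ⟨hqb.1.mono ?_, h.append hB hqb.2⟩
    change A ∪ ⋃ a ∈ bs ++ as, Set.range a ⊆ _
    rw [hbs, Set.union_left_comm, Set.union_comm B]
    exact Set.union_subset_union_right _ hB

theorem tpEq (hAB : A ⊆ B) {c : β → 𝕄} : ∀ {ps : List (GlobalType L 𝕄 β)} {as : List (β → 𝕄)},
    IsGeneric B ps as → (∀ p ∈ ps, p.RealizesOver A c) → ∀ a ∈ as, TpEq L 𝕄 A a c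
  | [], [], _, _ => by simp
  | p :: ps, a :: as, h, hps => by
    rw [List.forall_mem_cons] at hps ⊢
    exact ⟨(h.1.mono (hAB.trans Set.subset_union_left)).tpEq hps.1, h.2.tpEq hAB hps.2⟩

theorem of_forall_lt {p : ℕ → GlobalType L 𝕄 β} {a : ℕ → β → 𝕄} : ∀ {n : ℕ},
    (∀ i < n, (p i).RealizesOver (A ∪ ⋃ j ∈ Set.Iio i, Set.range (a j)) (a i)) →
    IsGeneric A ((List.range n).reverse.map p) ((List.range n).reverse.map a)
  | 0, _ => trivial
  | n + 1, h => by
    simp only [List.range_succ, List.reverse_append, List.reverse_singleton, List.singleton_append,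
      List.map_cons]
    refine ⟨?_, of_forall_lt fun i hi => h i (hi.trans n.lt_succ_self)⟩
    simpa using h n n.lt_succ_self

theorem tpEq_flat {n : ℕ} {f g : Fin n → β → 𝕄} (hps : ∀ p ∈ ps, p.InvariantOver A)
    (hf : IsGeneric A ps (List.ofFn f)) (hg : IsGeneric A ps (List.ofFn g)) :
    TpEq L 𝕄 A (flat f) (flat g) := by
  induction n generalizing ps with
  | zero =>
    rw [Subsingleton.elim f g]
    exact TpEq.refl _
  | succ n ih =>
    obtain _ | ⟨p, ps⟩ := ps
    · simp [IsGeneric] at hf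
    rw [List.forall_mem_cons] at hps
    rw [List.ofFn_succ] at hf hg
    have htail := ih hps.2 hf.2 hg.2
    have h := hps.1.tpEq_sumElim htail (biUnion_range_ofFn _ ▸ hf.1) (biUnion_range_ofFn _ ▸ hg.1)
    have flat_eq (f : Fin (n + 1) → β → 𝕄) : Sum.elim (f 0) (flat fun i => f (Fin.succ i)) ∘
      (fun ij => Fin.cases (Sum.inl ij.2) (fun i => Sum.inr (i, ij.2)) ij.1) = flat f := by
      funext ⟨i, j⟩
      cases i using Fin.cases <;> rfl
    rw [← flat_eq f, ← flat_eq g]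
    exact h.comp _

end IsGeneric

theorem IsCountablySaturatedOver.exists_isGeneric [Countable β] (h : IsCountablySaturatedOver L A)
    (hB : B.Countable) : ∀ ps : List (GlobalType L 𝕄 β), ∃ as, IsGeneric (A ∪ B) ps as
  | [] => ⟨[], trivial⟩
  | p :: ps => by
    obtain ⟨as, has⟩ := h.exists_isGeneric hB ps
    obtain ⟨a, ha⟩ := h.exists_realizesOver p (hB.union (countable_biUnion_range as))
    exact ⟨a :: as, Set.union_assoc A B _ ▸ ha, has⟩

end GenericSequences

section Consistency

variable {L : FirstOrder.Language.{u, v}} {𝕄 : Type w} [L.Structure 𝕄] {A : Set 𝕄}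
variable {α : Type w'} {β : Type} {D : Set (α ⊕ β → 𝕄)}

/-- The global `A`-invariant extensions of `tp(c/A)`. -/
def invariantExtensions (L : FirstOrder.Language.{u, v}) {𝕄 : Type w} [L.Structure 𝕄]
    (A : Set 𝕄) (c : β → 𝕄) : Set (GlobalType L 𝕄 β) :=
  {p | p.InvariantOver A ∧ p.RealizesOver A c}

/-- The instances `D(x, aᵢ)` of the relation `D` are simultaneously satisfiable for some generic
sequence `as` in the global types `ps`. For invariant types and a definable `D` this does not depend
on the choice of `as`. -/
def ConsistentAlong (A : Set 𝕄) (D : Set (α ⊕ β → 𝕄)) (ps : List (GlobalType L 𝕄 β)) : Prop :=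
  ∃ as, IsGeneric A ps as ∧ ∃ x, ∀ a ∈ as, Sum.elim x a ∈ D

theorem definable_forall_sumElim_comp_mem (hD : A.Definable L D) {ι : Type*} {γ : Type*} [Finite ι]
    (f : ι → β → γ) :
    A.Definable L {z : α ⊕ γ → 𝕄 | ∀ i, Sum.elim (z ∘ Sum.inl) (z ∘ Sum.inr ∘ f i) ∈ D} := by
  rw [Set.ofPred_forall]
  refine Set.definable_iInter_of_finite fun i => ?_
  have elim_eq (z : α ⊕ γ → 𝕄) : Sum.elim (z ∘ Sum.inl) (z ∘ Sum.inr ∘ f i) =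
      z ∘ Sum.map id (f i) :=
    funext (by rintro (j | j) <;> rfl)
  simp only [elim_eq]
  exact hD.preimage_comp (Sum.map id (f i))

theorem ConsistentAlong.exists_forall_mem (hD : A.Definable L D) {ps : List (GlobalType L 𝕄 β)}
    (hps : ∀ p ∈ ps, p.InvariantOver A) (h : ConsistentAlong A D ps) {bs : List (β → 𝕄)}
    (hbs : IsGeneric A ps bs) : ∃ x, ∀ b ∈ bs, Sum.elim x b ∈ D := by
  obtain ⟨as, has, hx⟩ := h
  obtain ⟨f, rfl⟩ : ∃ f : Fin ps.length → β → 𝕄, List.ofFn f = as :=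
    has.length_eq ▸ ⟨as.get, List.ofFn_get as⟩
  obtain ⟨g, rfl⟩ : ∃ g : Fin ps.length → β → 𝕄, List.ofFn g = bs :=
    hbs.length_eq ▸ ⟨bs.get, List.ofFn_get bs⟩
  have hfg := (has.tpEq_flat hps hbs).mem_iff (definable_exists
    (definable_forall_sumElim_comp_mem hD fun i : Fin ps.length => Prod.mk i))
  simp only [List.forall_mem_ofFn_iff] at hx ⊢
  exact hfg.1 hx

end Consistency

section KimDividing

variable {L : FirstOrder.Language.{u, v}} {𝕄 : Type w} [L.Structure 𝕄] {A : Set 𝕄}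
variable {α : Type w'} {β : Type} {D : Set (α ⊕ β → 𝕄)} {c : β → 𝕄}

theorem exists_isMorleyOver_of_kimDividesOver {φ : ParamFormula L 𝕄 (α ⊕ β)} (hφ : φ.ParamsIn A)
    (h : (φ.subst c).KimDividesOver A) :
    ∃ q ∈ invariantExtensions L A c, ∃ b : ℕ → β → 𝕄, q.IsMorleyOver A b ∧
      ¬FamConsistent fun (i : ℕ) (x : α → 𝕄) => Sum.elim x (b i) ∈ {z | φ.Realize z} := by
  obtain ⟨b, hb₀, ⟨q, hq, hqb⟩, hb⟩ := h
  have hbA (i : ℕ) : q.RealizesOver A (b i) := (hqb i).mono Set.subset_union_left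
  have hb_params (i : ℕ) : b i = Sum.elim (b i ∘ Sum.inl) φ.params := by
    ext (j | j)
    · rfl
    · exact (((hbA 0).tpEq (hbA i)).sumElim hφ).apply_eq_apply
        (i := Sum.inl (Sum.inr j)) (j := Sum.inr j) (congrFun hb₀ (Sum.inr j))
  refine ⟨q.comap Sum.inl, ⟨hq.comap _, ?_⟩, fun i => b i ∘ Sum.inl, fun i => ?_, ?_⟩
  · have hc := (hbA 0).comap Sum.inl
    rwa [hb₀] at hc
  · exact ((hqb i).mono (Set.union_subset_union_right _ (Set.iUnion₂_mono fun j _ =>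
      Set.range_comp_subset_range _ _))).comap _
  · convert hb using 5 with i x
    rw [hb_params i]
    exact (φ.realize_subst _ _).symm

theorem not_consistentAlong_replicate_of_not_famConsistent {q : GlobalType L 𝕄 β}
    (hD : A.Definable L D) (hq : q.InvariantOver A) {b : ℕ → β → 𝕄} (hqb : q.IsMorleyOver A b)
    (hb : ¬FamConsistent fun (i : ℕ) (x : α → 𝕄) => Sum.elim x (b i) ∈ D) :
    ∃ K, ¬ConsistentAlong A D (List.replicate K q) := by
  simp only [FamConsistent, not_forall] at hb
  obtain ⟨s, hs⟩ := hb
  refine ⟨s.sup id + 1, fun h => hs ?_⟩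
  have hgen := IsGeneric.of_forall_lt (p := fun _ => q) (n := s.sup id + 1) fun i _ => hqb i
  rw [List.map_const', List.length_reverse, List.length_range] at hgen
  obtain ⟨x, hx⟩ := h.exists_forall_mem hD (by simp [hq]) hgen
  exact ⟨x, fun i hi => hx _ (List.mem_map_of_mem
    (by simpa [Nat.lt_succ_iff] using Finset.le_sup (f := id) hi))⟩

/-- `D` is consistent along `qs` preceded by some arbitrarily long sequences of types from `Q`. -/
def HasLongConsistentExtensions (A : Set 𝕄) (D : Set (α ⊕ β → 𝕄)) (Q : Set (GlobalType L 𝕄 β))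
    (qs : List (GlobalType L 𝕄 β)) : Prop :=
  ∀ n, ∃ ps : List (GlobalType L 𝕄 β), ps.length = n ∧ (∀ p ∈ ps, p ∈ Q) ∧
    ConsistentAlong A D (qs ++ ps)

theorem HasLongConsistentExtensions.exists_replicate {Q : Set (GlobalType L 𝕄 β)}
    (hQ : HasLongConsistentExtensions A D Q []) {q : GlobalType L 𝕄 β} {K : ℕ}
    (hK : ¬ConsistentAlong A D (List.replicate K q)) :
    ∃ l r, HasLongConsistentExtensions A D Q (List.replicate l q) ∧
      ∀ ps : List (GlobalType L 𝕄 β), ps.length = r → (∀ p ∈ ps, p ∈ Q) →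
        ¬ConsistentAlong A D (List.replicate (l + 1) q ++ ps) := by
  by_contra! h
  have hl (l : ℕ) : HasLongConsistentExtensions A D Q (List.replicate l q) := by
    induction l with
    | zero => exact hQ
    | succ l ih => exact fun n => h l n ih
  obtain ⟨ps, hps, -, hK'⟩ := hl K 0
  obtain rfl := List.length_eq_zero_iff.1 hps
  exact hK (List.append_nil (List.replicate K q) ▸ hK')

end KimDividing

section GenericTrees

variable {L : FirstOrder.Language.{u, v}} {𝕄 : Type w} [L.Structure 𝕄] {A : Set 𝕄} {β : Type}
variable {q : GlobalType L 𝕄 β} {ps : List (GlobalType L 𝕄 β)} {S : List Bool → β → 𝕄}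

/-- The binary tree `S` is generic of depth `ps.length`: a node of level `i` realizes `ps[i]` over
`A` and all nodes strictly above it, and its right successor realizes `q` over `A` and the tree
above its left successor. -/
def IsGenericTree (A : Set 𝕄) (q : GlobalType L 𝕄 β) :
    List (GlobalType L 𝕄 β) → (List Bool → β → 𝕄) → Prop
  | [], _ => True
  | p :: ps, S =>
    p.RealizesOver (A ∪ Set.range (flat fun ν : Bool × List Bool => S (ν.1 :: ν.2))) (S []) ∧
      q.RealizesOver (A ∪ Set.range (flat fun ν => S (false :: ν))) (S [true]) ∧
      ∀ d, IsGenericTree A q ps fun ν => S (d :: ν)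

/-- The binary tree with root `a` and the two subtrees `S` and `S'` above it. -/
def joinTree (a : β → 𝕄) (S S' : List Bool → β → 𝕄) : List Bool → β → 𝕄
  | [] => a
  | false :: ν => S ν
  | true :: ν => S' ν

theorem GlobalType.InvariantOver.realizesOver_flat_of_tpEq {p : GlobalType L 𝕄 β}
    (hp : p.InvariantOver A) {ι κ : Type} {S S' : ι → β → 𝕄}
    (h : TpEq L 𝕄 A (flat S) (flat S')) {i : ι} {f : κ → ι}
    (hi : p.RealizesOver (A ∪ Set.range (flat fun k => S (f k))) (S i)) :
    p.RealizesOver (A ∪ Set.range (flat fun k => S' (f k))) (S' i) := by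
  have hS := h.comp (Sum.elim (Prod.mk i) (Prod.map f id) : β ⊕ κ × β → ι × β)
  rw [Sum.comp_elim, Sum.comp_elim] at hS
  exact hp.realizesOver_of_tpEq hi hS

namespace IsGenericTree

theorem of_tpEq (hq : q.InvariantOver A) :
    ∀ {ps : List (GlobalType L 𝕄 β)} {S S' : List Bool → β → 𝕄}, (∀ p ∈ ps, p.InvariantOver A) →
      IsGenericTree A q ps S → TpEq L 𝕄 A (flat S) (flat S') → IsGenericTree A q ps S'
  | [], _, _, _, _, _ => trivial
  | p :: ps, S, S', hps, h, hS => by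
    rw [List.forall_mem_cons] at hps
    exact ⟨hps.1.realizesOver_flat_of_tpEq hS h.1, hq.realizesOver_flat_of_tpEq hS h.2.1, fun d =>
      of_tpEq hq hps.2 (h.2.2 d) (hS.comp (Prod.map (List.cons d) id))⟩

theorem subtree : ∀ {ps : List (GlobalType L 𝕄 β)} {S : List Bool → β → 𝕄},
    IsGenericTree A q ps S → ∀ η : List Bool,
      IsGenericTree A q (ps.drop η.length) fun ν => S (η ++ ν)
  | _, _, h, [] => h
  | [], _, _, _ :: _ => trivial
  | _ :: _, _, h, d :: η => (h.2.2 d).subtree η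

theorem realizesOver_append_true (h : IsGenericTree A q ps S) {η : List Bool}
    (hη : η.length < ps.length) :
    q.RealizesOver (A ∪ Set.range (flat fun ν => S (η ++ false :: ν))) (S (η ++ [true])) := by
  have hsub := h.subtree η
  rw [List.drop_eq_getElem_cons hη] at hsub
  exact hsub.2.1

theorem isGeneric_take : ∀ {ps : List (GlobalType L 𝕄 β)} {S : List Bool → β → 𝕄},
    IsGenericTree A q ps S → ∀ {ρ : List Bool}, ρ.length ≤ ps.length →
      IsGeneric A (ps.take ρ.length) ((List.range ρ.length).map fun i => S (ρ.take i))
  | _, _, _, [], _ => by simp [IsGeneric]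
  | p :: ps, S, h, d :: ρ, hρ => by
    rw [List.length_cons, List.range_succ_eq_map, List.map_cons, List.map_map]
    refine ⟨h.1.mono (Set.union_subset_union_right _ ?_),
      (h.2.2 d).isGeneric_take (Nat.le_of_succ_le_succ hρ)⟩
    exact biUnion_range_subset_range_flat (List.forall_mem_map.2 fun i _ => ⟨(d, ρ.take i), rfl⟩)

end IsGenericTree

theorem IsCountablySaturatedOver.exists_isGenericTree [Countable β]
    (h : IsCountablySaturatedOver L A) {c : β → 𝕄} (hq : q ∈ invariantExtensions L A c)
    (hps : ∀ p ∈ ps, p ∈ invariantExtensions L A c) :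
    ∃ S, IsGenericTree A q ps S ∧ ∀ ν, TpEq L 𝕄 A (S ν) c := by
  induction ps with
  | nil => exact ⟨fun _ => c, trivial, fun _ => TpEq.refl c⟩
  | cons p ps ih =>
    rw [List.forall_mem_cons] at hps
    obtain ⟨S, hS, hSc⟩ := ih hps.2
    obtain ⟨b, hb⟩ := h.exists_realizesOver q (Set.countable_range (flat S))
    have hbc : TpEq L 𝕄 A b c := (hb.mono Set.subset_union_left).tpEq hq.2
    -- The right subtree is a copy over `A` of the left one, with a root realizing `q` over it.
    obtain ⟨S', rfl, hSS'⟩ := h.exists_tpEq_comp_eq (f := Prod.mk []) (a := flat S)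
      ((hSc []).trans hbc.symm)
    obtain ⟨S', rfl⟩ : ∃ S'' : List Bool → β → 𝕄, flat S'' = S' := ⟨Function.curry S', rfl⟩
    obtain ⟨a, ha⟩ := h.exists_realizesOver p
      ((Set.countable_range (flat S)).union (Set.countable_range (flat S')))
    refine ⟨joinTree a S S', ⟨ha.mono (Set.union_subset_union_right _ ?_), ?_, ?_⟩, ?_⟩
    · rintro _ ⟨⟨⟨_ | _, ν⟩, j⟩, rfl⟩
      · exact Or.inl ⟨(ν, j), rfl⟩
      · exact Or.inr ⟨(ν, j), rfl⟩
    · exact hb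
    · rintro (_ | _)
      · exact hS
      · exact hS.of_tpEq hq.1 (fun p hp => (hps.2 p hp).1) hSS'
    · rintro (_ | ⟨_ | _, ν⟩)
      · exact (ha.mono Set.subset_union_left).tpEq hps.1.2
      · exact hSc ν
      · exact (hSS'.symm.comp (Prod.mk ν)).trans (hSc ν)

end GenericTrees

section SOP1Trees

variable {L : FirstOrder.Language.{u, v}} {𝕄 : Type w} [L.Structure 𝕄] {A : Set 𝕄} {β : Type}
variable {α : Type w'} {D : Set (α ⊕ β → 𝕄)}
variable {q : GlobalType L 𝕄 β} {ps qs : List (GlobalType L 𝕄 β)} {S : List Bool → β → 𝕄}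

/-- The tree of conditions `C` has the pattern defining `SOP₁` up to level `N`. -/
def IsSOP1TreeUpTo {X : Type*} (C : List Bool → X → Prop) (N : ℕ) : Prop :=
  (∀ η : List Bool, η.length ≤ N → ∃ x, ∀ ν, ν <+: η → C ν x) ∧
    ∀ η₁ η₂ : List Bool, η₂.length ≤ N → η₁ ++ [false] <+: η₂ →
      ¬∃ x, C η₂ x ∧ C (η₁ ++ [true]) x

theorem IsSOP1TreeUpTo.mono {X : Type*} {C : List Bool → X → Prop} {N N' : ℕ}
    (h : IsSOP1TreeUpTo C N) (hN : N' ≤ N) : IsSOP1TreeUpTo C N' :=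
  ⟨fun η hη => h.1 η (hη.trans hN), fun η₁ η₂ hη₂ => h.2 η₁ η₂ (hη₂.trans hN)⟩

/-- The node of the binary tree reached from the root by going `r` steps to the left before every
step of `η`. -/
def stretch (r : ℕ) (η : List Bool) : List Bool :=
  η.flatMap fun i => List.replicate r false ++ [i]

theorem stretch_append (r : ℕ) (η ν : List Bool) :
    stretch r (η ++ ν) = stretch r η ++ stretch r ν :=
  List.flatMap_append

theorem stretch_cons (r : ℕ) (i : Bool) (η : List Bool) :
    stretch r (i :: η) = List.replicate r false ++ i :: stretch r η := by
  simp only [stretch, List.flatMap_cons, List.append_assoc, List.singleton_append]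

theorem length_stretch (r : ℕ) (η : List Bool) : (stretch r η).length = (r + 1) * η.length := by
  simp [stretch, List.length_flatMap, mul_comm]

theorem replicate_prefix_stretch_cons {r j : ℕ} (hj : j ≤ r) (i : Bool) (η : List Bool) :
    ∃ d μ, List.replicate j false ++ d :: μ = stretch r (i :: η) := by
  obtain ⟨k, rfl⟩ := Nat.exists_eq_add_of_le hj
  rw [stretch_cons, List.replicate_add, List.append_assoc]
  cases k with
  | zero => exact ⟨i, stretch _ η, rfl⟩
  | succ k => exact ⟨false, List.replicate k false ++ i :: stretch _ η, rfl⟩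

/-- The nodes of `S` on the block of `r + 1` levels starting at `stretch r η`, along the leftmost
path, preceded by the tuples `es`. -/
def blockTree (r : ℕ) (es : List (β → 𝕄)) (S : List Bool → β → 𝕄) (η : List Bool) :
    List (β → 𝕄) :=
  es ++ (List.range (r + 1)).map fun j => S (stretch r η ++ List.replicate j false)

theorem length_blockTree (r : ℕ) (es : List (β → 𝕄)) (S : List Bool → β → 𝕄) (η : List Bool) :
    (blockTree r es S η).length = es.length + (r + 1) := by
  simp [blockTree]

theorem forall_mem_blockTree {r : ℕ} {es : List (β → 𝕄)} {η : List Bool} {P : (β → 𝕄) → Prop} :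
    (∀ a ∈ blockTree r es S η, P a) ↔
      (∀ e ∈ es, P e) ∧ ∀ j ≤ r, P (S (stretch r η ++ List.replicate j false)) := by
  simp only [blockTree, List.forall_mem_append, List.forall_mem_map, List.mem_range,
    Nat.lt_succ_iff]

namespace IsGenericTree

theorem exists_forall_append_cons_eq (hD : A.Definable L D) (h : IsGenericTree A q ps S)
    (hqps : ∀ p ∈ qs ++ ps, p.InvariantOver A) (hcons : ConsistentAlong A D (qs ++ ps))
    {es : List (β → 𝕄)} (hes : IsGeneric (A ∪ Set.range (flat S)) qs es) {ρ : List Bool}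
    (hρ : ρ.length = ps.length) :
    ∃ x, (∀ e ∈ es, Sum.elim x e ∈ D) ∧ ∀ ν d μ, ν ++ d :: μ = ρ → Sum.elim x (S ν) ∈ D := by
  have hgen := h.isGeneric_take hρ.le
  rw [List.take_of_length_le hρ.ge] at hgen
  obtain ⟨x, hx⟩ := hcons.exists_forall_mem hD hqps (hgen.append
    (Set.union_subset_union_right _ (biUnion_range_subset_range_flat
      (List.forall_mem_map.2 fun i _ => ⟨ρ.take i, rfl⟩))) hes)
  rw [List.forall_mem_append] at hx
  refine ⟨x, hx.1, fun ν d μ hν => ?_⟩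
  have hS := hx.2 _ (List.mem_map_of_mem (f := fun i => S (ρ.take i))
    (List.mem_range.2 (show ν.length < ρ.length by simp [← hν])))
  rwa [← hν, List.take_left] at hS

theorem isGeneric_append_cons (h : IsGenericTree A q ps S) {es : List (β → 𝕄)}
    (hes : IsGeneric (A ∪ Set.range (flat S)) qs es) {η ν : List Bool} {r : ℕ}
    (hr : (η ++ false :: ν).length + r ≤ ps.length) :
    IsGeneric A (qs ++ q :: (ps.drop (η ++ false :: ν).length).take r)
      (es ++ S (η ++ [true]) ::
        (List.range r).map fun i => S (η ++ false :: ν ++ List.replicate i false)) := by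
  have hpath := (h.subtree (η ++ false :: ν)).isGeneric_take (ρ := List.replicate r false) (by
    rw [List.length_drop, List.length_replicate]; lia)
  rw [List.length_replicate] at hpath
  have htake (i : ℕ) (hi : i ∈ List.range r) :
      S (η ++ false :: ν ++ (List.replicate r false).take i) =
        S (η ++ false :: ν ++ List.replicate i false) := by
    rw [List.take_replicate, min_eq_left (List.mem_range.1 hi).le]
  rw [List.map_congr_left htake] at hpath
  have hfork := h.realizesOver_append_true (η := η)
    (by rw [List.length_append, List.length_cons] at hr; lia)
  have hbase : IsGeneric A (q :: (ps.drop (η ++ false :: ν).length).take r) (S (η ++ [true]) ::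
      (List.range r).map fun i => S (η ++ false :: ν ++ List.replicate i false)) := by
    refine ⟨hfork.mono (Set.union_subset_union_right _ ?_), hpath⟩
    simp only [List.append_assoc, List.cons_append]
    exact biUnion_range_subset_range_flat (List.forall_mem_map.2 fun i _ => ⟨_, rfl⟩)
  refine hbase.append (Set.union_subset_union_right _ (biUnion_range_subset_range_flat ?_)) hes
  exact List.forall_mem_cons.2 ⟨⟨_, rfl⟩, List.forall_mem_map.2 fun i _ => ⟨_, rfl⟩⟩

theorem exists_forall_mem_blockTree (hD : A.Definable L D) {r N : ℕ} (h : IsGenericTree A q ps S)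
    (hqps : ∀ p ∈ qs ++ ps, p.InvariantOver A) (hcons : ConsistentAlong A D (qs ++ ps))
    {es : List (β → 𝕄)} (hes : IsGeneric (A ∪ Set.range (flat S)) qs es)
    (hlen : ps.length = (r + 1) * (N + 1)) {η : List Bool} (hη : η.length ≤ N) :
    ∃ x, ∀ ν, ν <+: η → ∀ a ∈ blockTree r es S ν, Sum.elim x a ∈ D := by
  obtain ⟨k, hk⟩ := Nat.exists_eq_add_of_le hη
  obtain ⟨x, hxe, hxS⟩ := h.exists_forall_append_cons_eq hD hqps hcons hes
    (ρ := stretch r (η ++ List.replicate (k + 1) false)) (by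
      rw [length_stretch, hlen, List.length_append, List.length_replicate, hk, add_assoc])
  refine ⟨x, fun ν ⟨μ, hμ⟩ => forall_mem_blockTree.2 ⟨hxe, fun j hj => ?_⟩⟩
  -- The depth of `S` leaves one block to spare, so the path continues past the block of `ν`.
  obtain ⟨i, μ', hiμ'⟩ := List.exists_cons_of_ne_nil (l := μ ++ List.replicate (k + 1) false)
    (List.append_ne_nil_of_right_ne_nil μ (List.cons_ne_nil false _))
  obtain ⟨d, ξ, hξ⟩ := replicate_prefix_stretch_cons hj i μ'
  refine hxS _ d ξ ?_
  rw [List.append_assoc, hξ, ← stretch_append, ← hiμ', ← List.append_assoc, hμ]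

theorem not_exists_forall_mem_blockTree {l r N : ℕ} {Q : Set (GlobalType L 𝕄 β)}
    (h : IsGenericTree A q ps S) (hps : ∀ p ∈ ps, p ∈ Q) (hlen : ps.length = (r + 1) * (N + 1))
    (hmax : ∀ ps : List (GlobalType L 𝕄 β), ps.length = r → (∀ p ∈ ps, p ∈ Q) →
      ¬ConsistentAlong A D (List.replicate (l + 1) q ++ ps))
    {es : List (β → 𝕄)} (hes : IsGeneric (A ∪ Set.range (flat S)) (List.replicate l q) es)
    {η μ : List Bool} (hN : (η ++ [false] ++ μ).length ≤ N) :
    ¬∃ x, (∀ a ∈ blockTree r es S (η ++ [false] ++ μ), Sum.elim x a ∈ D) ∧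
      ∀ a ∈ blockTree r es S (η ++ [true]), Sum.elim x a ∈ D := by
  simp only [forall_mem_blockTree]
  rintro ⟨x, ⟨hxe, hx_false⟩, -, hx_true⟩
  have stretch_false : stretch r η ++ List.replicate r false ++ false :: stretch r μ =
      stretch r (η ++ [false] ++ μ) := by
    rw [List.append_assoc η, List.singleton_append, stretch_append, stretch_cons,
      List.append_assoc]
  have stretch_true : stretch r (η ++ [true]) =
      stretch r η ++ List.replicate r false ++ [true] := by
    rw [stretch_append, stretch_cons, List.append_assoc]
    rfl
  have hr : (stretch r (η ++ [false] ++ μ)).length + r ≤ ps.length := by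
    rw [length_stretch, hlen]
    nlinarith
  have hgen := h.isGeneric_append_cons hes (stretch_false ▸ hr)
  rw [stretch_false] at hgen
  refine hmax ((ps.drop (stretch r (η ++ [false] ++ μ)).length).take r) ?_ ?_ ?_
  · rw [List.length_take, List.length_drop]
    lia
  · exact fun p hp => hps p (List.mem_of_mem_drop (List.mem_of_mem_take hp))
  · rw [List.replicate_succ', List.append_assoc, List.singleton_append]
    refine ⟨_, hgen, x, ?_⟩
    simp only [List.forall_mem_append, List.forall_mem_cons, List.forall_mem_map, List.mem_range]
    refine ⟨hxe, ?_, fun i hi => hx_false i hi.le⟩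
    simpa only [stretch_true, List.replicate_zero, List.append_nil] using hx_true 0 r.zero_le

theorem isSOP1TreeUpTo_blockTree (hD : A.Definable L D) {l r N : ℕ}
    {Q : Set (GlobalType L 𝕄 β)} (hQ : ∀ p ∈ Q, p.InvariantOver A) (hq : q ∈ Q)
    (h : IsGenericTree A q ps S) (hps : ∀ p ∈ ps, p ∈ Q) (hlen : ps.length = (r + 1) * (N + 1))
    (hcons : ConsistentAlong A D (List.replicate l q ++ ps))
    (hmax : ∀ ps : List (GlobalType L 𝕄 β), ps.length = r → (∀ p ∈ ps, p ∈ Q) →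
      ¬ConsistentAlong A D (List.replicate (l + 1) q ++ ps))
    {es : List (β → 𝕄)} (hes : IsGeneric (A ∪ Set.range (flat S)) (List.replicate l q) es) :
    IsSOP1TreeUpTo (fun η x => ∀ a ∈ blockTree r es S η, Sum.elim x a ∈ D) N := by
  have hinv : ∀ p ∈ List.replicate l q ++ ps, p.InvariantOver A :=
    List.forall_mem_append.2 ⟨fun p hp => List.eq_of_mem_replicate hp ▸ hQ q hq,
      fun p hp => hQ p (hps p hp)⟩
  refine ⟨fun η hη => h.exists_forall_mem_blockTree hD hinv hcons hes hlen hη, ?_⟩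
  rintro η _ hN ⟨μ, rfl⟩
  exact h.not_exists_forall_mem_blockTree hps hlen hmax hes hN

end IsGenericTree

theorem IsCountablySaturatedOver.exists_isSOP1TreeUpTo [Countable β]
    (h : IsCountablySaturatedOver L A) (hD : A.Definable L D) {c : β → 𝕄}
    (hq : q ∈ invariantExtensions L A c) {l r : ℕ}
    (hlong : HasLongConsistentExtensions A D (invariantExtensions L A c) (List.replicate l q))
    (hmax : ∀ ps : List (GlobalType L 𝕄 β), ps.length = r →
      (∀ p ∈ ps, p ∈ invariantExtensions L A c) →
        ¬ConsistentAlong A D (List.replicate (l + 1) q ++ ps)) (N : ℕ) :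
    ∃ T : List Bool → Fin (l + (r + 1)) → β → 𝕄, (∀ η i, TpEq L 𝕄 A (T η i) c) ∧
      IsSOP1TreeUpTo (fun η x => ∀ i, Sum.elim x (T η i) ∈ D) N := by
  obtain ⟨ps, hlen, hps, hcons⟩ := hlong ((r + 1) * (N + 1))
  obtain ⟨S, hS, hSc⟩ := h.exists_isGenericTree hq hps
  obtain ⟨es, hes⟩ := h.exists_isGeneric (Set.countable_range (flat S)) (List.replicate l q)
  have hlen_block (η : List Bool) : (blockTree r es S η).length = l + (r + 1) := by
    rw [length_blockTree, hes.length_eq, List.length_replicate]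
  have exists_ofFn (η : List Bool) :
      ∃ t : Fin (l + (r + 1)) → β → 𝕄, List.ofFn t = blockTree r es S η :=
    hlen_block η ▸ ⟨(blockTree r es S η).get, List.ofFn_get _⟩
  choose T hT using exists_ofFn
  have hblock := hS.isSOP1TreeUpTo_blockTree hD (fun p hp => hp.1) hq hps hlen hcons hmax hes
  simp only [← hT, List.forall_mem_ofFn_iff] at hblock
  refine ⟨T, fun η => ?_, hblock⟩
  rw [← List.forall_mem_ofFn_iff (P := fun a => TpEq L 𝕄 A a c), hT, forall_mem_blockTree]
  exact ⟨hes.tpEq Set.subset_union_left fun p hp => List.eq_of_mem_replicate hp ▸ hq.2,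
    fun j _ => hSc _⟩

end SOP1Trees

section Compactness

variable {L : FirstOrder.Language.{u, v}} {𝕄 : Type w} [L.Structure 𝕄] {A : Set 𝕄}

theorem definable_isSOP1TreeUpTo {α γ : Type} {D : Set (α ⊕ γ → 𝕄)} (hD : A.Definable L D) (N : ℕ) :
    A.Definable L {y : List Bool × γ → 𝕄 |
      IsSOP1TreeUpTo (fun η x => Sum.elim x (y ∘ Prod.mk η) ∈ D) N} := by
  have definable_consistent {ι : Type} [Finite ι] (f : ι → List Bool) :
      A.Definable L {y : List Bool × γ → 𝕄 | ∃ x, ∀ i, Sum.elim x (y ∘ Prod.mk (f i)) ∈ D} :=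
    definable_exists (definable_forall_sumElim_comp_mem hD fun i => Prod.mk (f i))
  have hfin := List.finite_length_le Bool N
  have : Finite {η : List Bool // η.length ≤ N} := hfin
  have (η : List Bool) : Finite {ν // ν <+: η} :=
    (List.finite_length_le Bool η.length).subset fun _ => List.IsPrefix.length_le
  have : Finite {η : List Bool × List Bool // η.2.length ≤ N ∧ η.1 ++ [false] <+: η.2} :=
    (hfin.prod hfin).subset fun η hη =>
      ⟨((List.prefix_append _ _).trans hη.2).length_le.trans hη.1, hη.1⟩
  have hcons := Set.definable_iInter_of_finite fun η : {η : List Bool // η.length ≤ N} =>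
    definable_consistent fun ν : {ν // ν <+: η.1} => ν.1
  have hincons := Set.definable_iInter_of_finite
    fun η : {η : List Bool × List Bool // η.2.length ≤ N ∧ η.1 ++ [false] <+: η.2} =>
      (definable_consistent fun b : Bool => cond b (η.1.1 ++ [true]) η.1.2).compl
  convert hcons.inter hincons using 1
  ext y
  simp [IsSOP1TreeUpTo]

theorem IsCountablySaturatedOver.exists_forall_isSOP1TreeUpTo (h : IsCountablySaturatedOver L A)
    {α β ι : Type} [Countable β] [Finite ι] {D : Set (α ⊕ β → 𝕄)} (hD : A.Definable L D)
    {c : β → 𝕄} (hT : ∀ N, ∃ T : List Bool → ι → β → 𝕄, (∀ η i, TpEq L 𝕄 A (T η i) c) ∧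
      IsSOP1TreeUpTo (fun η x => ∀ i, Sum.elim x (T η i) ∈ D) N) :
    ∃ T : List Bool → ι → β → 𝕄, (∀ η i, TpEq L 𝕄 A (T η i) c) ∧
      ∀ N, IsSOP1TreeUpTo (fun η x => ∀ i, Sum.elim x (T η i) ∈ D) N := by
  have hDι := definable_forall_sumElim_comp_mem hD fun i : ι => Prod.mk i
  let I := (List Bool × ι × {E : Set (β → 𝕄) // A.Definable L E ∧ c ∈ E}) ⊕ ℕ
  let C : I → Set (List Bool × ι × β → 𝕄) := Sum.elim
    (fun t => {y | (fun j => y (t.1, t.2.1, j)) ∈ t.2.2.1})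
    fun N => {y | IsSOP1TreeUpTo (fun η x => ∀ i, Sum.elim x (fun j => y (η, i, j)) ∈ D) N}
  have hC : ∀ s, (A ∪ ∅).Definable L (C s) := by
    rw [Set.union_empty]
    rintro (⟨η, i, E⟩ | N)
    · exact E.2.1.preimage_comp fun j => (η, i, j)
    · exact definable_isSOP1TreeUpTo hDι N
  obtain ⟨y, hy⟩ := h.exists_forall_mem Set.countable_empty hC fun s => by
    obtain ⟨T, hTc, hT⟩ := hT (s.sup (Sum.elim 0 id))
    refine ⟨fun t => T t.1 t.2.1 t.2.2, ?_⟩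
    rintro (⟨η, i, E⟩ | N) hs
    · exact ((hTc η i).mem_iff E.2.1).2 E.2.2
    · exact hT.mono (Finset.le_sup (f := Sum.elim 0 id) hs)
  refine ⟨fun η i j => y (η, i, j), fun η i => TpEq.symm ?_, fun N => hy (Sum.inr N)⟩
  exact TpEq.of_forall_definable fun E hE hcE => hy (Sum.inl (η, i, ⟨E, hE, hcE⟩))

theorem ofFn_prefix_ofFn {X : Type*} (σ : ℕ → X) {n n' : ℕ} (h : n ≤ n') :
    (List.ofFn fun i : Fin n => σ i) <+: List.ofFn fun i : Fin n' => σ i := by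
  obtain ⟨k, rfl⟩ := Nat.exists_eq_add_of_le h
  exact ⟨_, (List.ofFn_add (f := fun i : Fin (n + k) => σ i)).symm⟩

theorem not_coNSOP1_of_forall_isSOP1TreeUpTo {nv : ℕ} {P : Set (ParamFormula L 𝕄 (Fin nv))}
    {k m : ℕ} {D : Set (Fin k ⊕ (Fin m × Fin nv) → 𝕄)} (hD : A.Definable L D)
    {T : List Bool → Fin m → Fin nv → 𝕄} (hTP : ∀ η j, RealizesPType L 𝕄 P (T η j))
    (hT : ∀ N, IsSOP1TreeUpTo (fun η x => Sum.elim x (flat (T η)) ∈ D) N) :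
    ¬CoNSOP1 L 𝕄 A P := by
  obtain ⟨φ, hφA, rfl⟩ := exists_paramFormula_of_definable hD
  simp only [CoNSOP1, not_not, ParamFormula.realize_subst]
  refine ⟨k, m, φ, T, hφA, hTP, fun σ s => ?_, fun η₁ η₂ => (hT _).2 η₁ η₂ le_rfl⟩
  obtain ⟨x, hx⟩ := (hT _).1 (List.ofFn fun i : Fin (s.sup id) => σ i) le_rfl
  exact ⟨x, fun n hn => hx _ (ofFn_prefix_ofFn σ (Finset.le_sup (f := id) hn))⟩

theorem not_coNSOP1_of_forall_isSOP1TreeUpTo_forall {nv : ℕ} {P : Set (ParamFormula L 𝕄 (Fin nv))}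
    {k m g : ℕ} {D : Set (Fin k ⊕ (Fin m × Fin nv) → 𝕄)} (hD : A.Definable L D)
    {T : List Bool → Fin g → Fin m × Fin nv → 𝕄}
    (hTP : ∀ η i j, RealizesPType L 𝕄 P fun t => T η i (j, t))
    (hT : ∀ N, IsSOP1TreeUpTo (fun η x => ∀ i, Sum.elim x (T η i) ∈ D) N) : ¬CoNSOP1 L 𝕄 A P := by
  let T' (η : List Bool) (j : Fin (g * m)) : Fin nv → 𝕄 := fun t =>
    T η (finProdFinEquiv.symm j).1 ((finProdFinEquiv.symm j).2, t)
  have flat_comp (η : List Bool) (i : Fin g) :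
      (flat (T' η) ∘ fun q : Fin m × Fin nv => (finProdFinEquiv (i, q.1), q.2)) = T η i := by
    funext q
    simp only [Function.comp_apply, flat, T', Equiv.symm_apply_apply]
  refine not_coNSOP1_of_forall_isSOP1TreeUpTo (T := T') (definable_forall_sumElim_comp_mem hD
    fun (i : Fin g) (q : Fin m × Fin nv) => (finProdFinEquiv (i, q.1), q.2))
    (fun η j => hTP η _ _) fun N => ?_
  simp only [Set.mem_ofPred_eq, Sum.elim_comp_inl, ← Function.comp_assoc, Sum.elim_comp_inr,
    flat_comp]
  exact hT N

end Compactness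

theorem statement_6_general {L : FirstOrder.Language.{u, v}} {𝕄 : Type w} [L.Structure 𝕄]
    {A : Set 𝕄} (hA : IsCountablySaturatedOver L A) {nv : ℕ} {P : Set (ParamFormula L 𝕄 (Fin nv))}
    (hP : ∀ φ ∈ P, φ.ParamsIn A) (hco : CoNSOP1 L 𝕄 A P) {k m : ℕ}
    {φ : ParamFormula L 𝕄 (Fin k ⊕ (Fin m × Fin nv))} (hφ : φ.ParamsIn A)
    {c : Fin m → Fin nv → 𝕄} (hc : ∀ j, RealizesPType L 𝕄 P (c j))
    (hdiv : (φ.subst (flat c)).KimDividesOver A) :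
    ∃ N : ℕ, ∀ (n : ℕ) (cs : ℕ → Fin m → Fin nv → 𝕄) (ps : ℕ → GlobalType L 𝕄 (Fin m × Fin nv)),
      (∀ i ≤ n, TpEq L 𝕄 A (flat (cs i)) (flat c)) →
      (∀ i ≤ n, (ps i).InvariantOver A) →
      (∀ i ≤ n, (ps i).RealizesOver (A ∪ ⋃ j ∈ Set.Iio i, Set.range (flat (cs j))) (flat (cs i))) →
      (∃ xx : Fin k → 𝕄, ∀ i ≤ n, (φ.subst (flat (cs i))).Realize xx) →
      n ≤ N := by
  by_contra! hunbounded
  have hD := hφ.definable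
  have hlong : HasLongConsistentExtensions A {z | φ.Realize z}
      (invariantExtensions L A (flat c)) [] := by
    intro N
    obtain ⟨n, cs, ps, hcs, hps, hgen, ⟨x, hx⟩, hN⟩ := hunbounded N
    have hlt {i : ℕ} (hi : i ∈ (List.range N).reverse) : i ≤ n :=
      (List.mem_range.1 (List.mem_reverse.1 hi)).le.trans hN.le
    refine ⟨(List.range N).reverse.map ps, by simp, List.forall_mem_map.2 fun i hi => ?_, _,
      IsGeneric.of_forall_lt fun i hi => hgen i (hi.trans hN).le, x,
      List.forall_mem_map.2 fun i hi => (φ.realize_subst _ x).1 (hx i (hlt hi))⟩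
    exact ⟨hps i (hlt hi), fun ψ hψ hψA =>
      (hcs i (hlt hi) ψ hψA).1 ((hgen i (hlt hi)).mono Set.subset_union_left ψ hψ hψA)⟩
  obtain ⟨q, hq, b, hqb, hb⟩ := exists_isMorleyOver_of_kimDividesOver hφ hdiv
  obtain ⟨K, hK⟩ := not_consistentAlong_replicate_of_not_famConsistent hD hq.1 hqb hb
  obtain ⟨l, r, hl, hmax⟩ := hlong.exists_replicate hK
  obtain ⟨T, hTc, hT⟩ := hA.exists_forall_isSOP1TreeUpTo hD
    (hA.exists_isSOP1TreeUpTo hD hq hl hmax)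
  refine not_coNSOP1_of_forall_isSOP1TreeUpTo_forall hD (fun η i j ψ hψ => ?_) hT hco
  exact ((hTc η i).comp (Prod.mk j) ψ (hP ψ hψ)).2 (hc j ψ hψ)

/-- for a co-NSOP₁ type `p`, an `L(M)`-formula `φ(x,y)` and a tuple `c`
of realizations of `p` with `φ(x,c)` Kim-dividing over `M`, there is a bound on the
length of sequences of `M`-finitely-satisfiable-type-generic copies of `c` on which
`φ` is consistent. -/
theorem statement_6
    (L : FirstOrder.Language.{u, v}) (𝕄 : Type w) [L.Structure 𝕄]
    (κ : Cardinal.{w}) [IsMonster L 𝕄 κ]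
    (M : L.ElementarySubstructure 𝕄) (hMsmall : Cardinal.mk ↥(M : Set 𝕄) < κ)
    {nv : ℕ} (P : Set (ParamFormula L 𝕄 (Fin nv)))
    (hP : ∀ φ ∈ P, φ.ParamsIn (M : Set 𝕄))
    (hco : CoNSOP1 L 𝕄 (M : Set 𝕄) P)
    {k m : ℕ} (φ : ParamFormula L 𝕄 (Fin k ⊕ (Fin m × Fin nv)))
    (hφ : φ.ParamsIn (M : Set 𝕄))
    (c : Fin m → Fin nv → 𝕄) (hc : ∀ j, RealizesPType L 𝕄 P (c j))
    (hdiv : (φ.subst (flat c)).KimDividesOver (M : Set 𝕄)) :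
    ∃ N : ℕ, ∀ (n : ℕ) (cs : ℕ → Fin m → Fin nv → 𝕄)
      (ps : ℕ → GlobalType L 𝕄 (Fin m × Fin nv)),
      (∀ i ≤ n, TpEq L 𝕄 (M : Set 𝕄) (flat (cs i)) (flat c)) →
      (∀ i ≤ n, (ps i).FinSatIn (M : Set 𝕄)) →
      (∀ i ≤ n, (ps i).RealizesOver
        ((M : Set 𝕄) ∪ ⋃ j ∈ Set.Iio i, Set.range (flat (cs j))) (flat (cs i))) →
      (∃ xx : Fin k → 𝕄, ∀ i ≤ n, (φ.subst (flat (cs i))).Realize xx) →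
      n ≤ N := by
  obtain ⟨N, hN⟩ := statement_6_general
    (IsMonster.isCountablySaturatedOver_elementarySubstructure hMsmall) hP hco hφ hc hdiv
  exact ⟨N, fun n cs ps hcs hps => hN n cs ps hcs fun i hi => (hps i hi).invariantOver⟩

end NSOP3Paper
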